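/- Let C ∈ RH∞^{n×n} be real-rational and γ > 0. Then [P,C] is stable for every strictly negative imaginary (SNI) P ∈ RH∞^{n×n} satisfying P(∞) ≥ 0 and P(0) ≤ γI if and only if C is negative imaginary (NI) and C(0) < (1/γ)I. -/

import Mathlib

open Matrix Polynomial Filter Topology
open scoped ComplexOrder

noncomputable section

namespace NIControl

/-- Evaluate a real-rational function at a complex point (junk value at poles). -/
def evalC (f : RatFunc ℝ) (s : ℂ) : ℂ :=
  f.eval (algebraMap ℝ ℂ) s

/-- `s` is a pole of the real-rational function `f`
(the reduced denominator vanishes at `s`). -/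
def IsPoleAt (f : RatFunc ℝ) (s : ℂ) : Prop :=
  f.denom.eval₂ (algebraMap ℝ ℂ) s = 0

variable {n : ℕ}

/-- Pointwise evaluation of a real-rational transfer matrix at a complex point. -/
def evalM (G : Matrix (Fin n) (Fin n) (RatFunc ℝ)) (s : ℂ) : Matrix (Fin n) (Fin n) ℂ :=
  Matrix.of fun i j => evalC (G i j) s

/-- Pointwise evaluation of a real-rational transfer matrix at a real point. -/
def evalR (G : Matrix (Fin n) (Fin n) (RatFunc ℝ)) (x : ℝ) : Matrix (Fin n) (Fin n) ℝ :=
  Matrix.of fun i j => (G i j).eval (RingHom.id ℝ) x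

/-- Value at `s = ∞` of a proper real-rational function. -/
def atInfinity (f : RatFunc ℝ) : ℝ :=
  if f.num.degree = f.denom.degree then f.num.leadingCoeff / f.denom.leadingCoeff else 0

/-- The instantaneous gain `G(∞)` of a proper real-rational transfer matrix. -/
def evalInf (G : Matrix (Fin n) (Fin n) (RatFunc ℝ)) : Matrix (Fin n) (Fin n) ℝ :=
  Matrix.of fun i j => atInfinity (G i j)

/-- The matrix `G` has a pole at `s`. -/
def HasPole (G : Matrix (Fin n) (Fin n) (RatFunc ℝ)) (s : ℂ) : Prop :=
  ∃ i j, IsPoleAt (G i j) s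

/-- All entries of `G` are proper rational functions. -/
def Proper (G : Matrix (Fin n) (Fin n) (RatFunc ℝ)) : Prop :=
  ∀ i j, (G i j).num.degree ≤ (G i j).denom.degree

/-- All entries of `G` are strictly proper rational functions. -/
def StrictlyProper (G : Matrix (Fin n) (Fin n) (RatFunc ℝ)) : Prop :=
  ∀ i j, (G i j).num.degree < (G i j).denom.degree

/-- The pole of `G` at the origin (if any) is at most simple. -/
def NoDoubleOriginPole (G : Matrix (Fin n) (Fin n) (RatFunc ℝ)) : Prop :=
  ∀ i j, (G i j).denom.rootMultiplicity 0 ≤ 1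

/-- Membership in `RH∞`: proper and no poles in the closed right-half complex plane. -/
def MemRHinf {m : Type*} [Fintype m] (G : Matrix m m (RatFunc ℝ)) : Prop :=
  (∀ i j, (G i j).num.degree ≤ (G i j).denom.degree) ∧
  ∀ s : ℂ, 0 ≤ s.re → ∀ i j, ¬ IsPoleAt (G i j) s

/-- The point `jω` on the imaginary axis. -/
def jw (ω : ℝ) : ℂ := Complex.I * (ω : ℂ)

/-- The negative-imaginary frequency kernel `j (M − M*)`. -/
def niKer (M : Matrix (Fin n) (Fin n) ℂ) : Matrix (Fin n) (Fin n) ℂ :=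
  Complex.I • (M - Mᴴ)

/-- Negative imaginary (NI) real-rational transfer matrix. -/
def IsNI (G : Matrix (Fin n) (Fin n) (RatFunc ℝ)) : Prop :=
  Proper G ∧
  (∀ s : ℂ, 0 < s.re → ¬ HasPole G s) ∧
  (∀ ω : ℝ, 0 < ω → ¬ HasPole G (jw ω) → (niKer (evalM G (jw ω))).PosSemidef) ∧
  (∀ ω : ℝ, 0 < ω → HasPole G (jw ω) →
    ∃ R : Matrix (Fin n) (Fin n) ℂ, R.PosSemidef ∧
      Tendsto (fun s : ℂ => (s - jw ω) • Complex.I • evalM G s) (𝓝[≠] jw ω) (𝓝 R)) ∧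
  (HasPole G 0 →
    (∀ k : ℕ, 3 ≤ k → Tendsto (fun s : ℂ => s ^ k • evalM G s) (𝓝[≠] 0) (𝓝 0)) ∧
    ∃ R : Matrix (Fin n) (Fin n) ℂ, R.PosSemidef ∧
      Tendsto (fun s : ℂ => s ^ 2 • evalM G s) (𝓝[≠] 0) (𝓝 R))

/-- Strictly negative imaginary (SNI) real-rational transfer matrix. -/
def IsSNI (G : Matrix (Fin n) (Fin n) (RatFunc ℝ)) : Prop :=
  MemRHinf G ∧ ∀ ω : ℝ, 0 < ω → (niKer (evalM G (jw ω))).PosDef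

/-- Positive real (passive) real-rational transfer matrix. -/
def IsPositiveReal (G : Matrix (Fin n) (Fin n) (RatFunc ℝ)) : Prop :=
  MemRHinf G ∧ ∀ ω : ℝ, 0 ≤ ω → (evalM G (jw ω) + (evalM G (jw ω))ᴴ).PosSemidef

/-- Output strictly passive real-rational transfer matrix. -/
def IsOSP (G : Matrix (Fin n) (Fin n) (RatFunc ℝ)) : Prop :=
  MemRHinf G ∧ ∃ ε : ℝ, 0 < ε ∧ ∀ ω : ℝ, 0 ≤ ω →
    (evalM G (jw ω) + (evalM G (jw ω))ᴴ -
      (ε : ℂ) • ((evalM G (jw ω))ᴴ * evalM G (jw ω))).PosSemidef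

/-- Stability of the positive feedback interconnection `[P, C]`:
`[I; C] (I − P C)⁻¹ [I, P] ∈ RH∞`. -/
def FeedbackStable (P C : Matrix (Fin n) (Fin n) (RatFunc ℝ)) : Prop :=
  ((1 : Matrix (Fin n) (Fin n) (RatFunc ℝ)) - P * C).det ≠ 0 ∧
  MemRHinf (Matrix.fromBlocks
    (1 - P * C)⁻¹ ((1 - P * C)⁻¹ * P)
    (C * (1 - P * C)⁻¹) (C * (1 - P * C)⁻¹ * P))

/-- All eigenvalues of the complex matrix `M` are real and less than `c`. -/
def eigsRealAndLT (M : Matrix (Fin n) (Fin n) ℂ) (c : ℝ) : Prop :=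
  ∀ μ ∈ spectrum ℂ M, μ.im = 0 ∧ μ.re < c

/-- The (real) eigenvalues of the real matrix `M` are all real and its largest
eigenvalue is less than `c`. -/
def maxEigLT (M : Matrix (Fin n) (Fin n) ℝ) (c : ℝ) : Prop :=
  eigsRealAndLT (M.map (Complex.ofReal)) c

/-- Loewner order `A ≤ B` on real matrices. -/
def LoewnerLE (A B : Matrix (Fin n) (Fin n) ℝ) : Prop := (B - A).PosSemidef

/-- Strict Loewner order `A < B` on real matrices. -/
def LoewnerLT (A B : Matrix (Fin n) (Fin n) ℝ) : Prop := (B - A).PosDef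

/-- Scalar version of membership in `RH∞`. -/
def RH (f : RatFunc ℝ) : Prop :=
  f.num.degree ≤ f.denom.degree ∧ ∀ s : ℂ, 0 ≤ s.re → ¬ IsPoleAt f s

/-- The polynomial has no roots in the closed right half plane. -/
def Good (q : ℝ[X]) : Prop := ∀ s : ℂ, 0 ≤ s.re → q.eval₂ (algebraMap ℝ ℂ) s ≠ 0

lemma Good.ne_zero {q : ℝ[X]} (hq : Good q) : q ≠ 0 := by
  rintro rfl
  exact hq 0 (by simp) (by simp)

lemma Good.mul {p q : ℝ[X]} (hp : Good p) (hq : Good q) : Good (p * q) := by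
  intro s hs
  rw [eval₂_mul]
  exact mul_ne_zero (hp s hs) (hq s hs)

lemma RH.good {f : RatFunc ℝ} (hf : RH f) : Good f.denom := fun s hs => hf.2 s hs

lemma frac_rel {f : RatFunc ℝ} {p q : ℝ[X]} (hq : q ≠ 0)
    (h : f = algebraMap _ _ p / algebraMap _ _ q) : f.num * q = p * f.denom :=
  (RatFunc.num_mul_eq_mul_denom_iff hq).2 h

lemma RH_of_frac {f : RatFunc ℝ} {p q : ℝ[X]} (hq : Good q) (hpq : p.degree ≤ q.degree)
    (h : f = algebraMap _ _ p / algebraMap _ _ q) : RH f := by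
  have hrel := frac_rel hq.ne_zero h
  constructor
  · by_contra hlt
    push Not at hlt
    have h1 : (f.num * q).degree = (p * f.denom).degree := by rw [hrel]
    rw [degree_mul, degree_mul] at h1
    have h2 : f.denom.degree + q.degree < f.num.degree + q.degree := by
      apply WithBot.add_lt_add_right _ hlt
      simpa using hq.ne_zero
    rw [h1, add_comm] at h2
    exact absurd h2 (not_lt.2 (by gcongr))
  · intro s hs hp
    obtain ⟨r, hr⟩ := RatFunc.denom_div_dvd p q
    rw [← h] at hr
    apply hq s hs
    rw [hr, eval₂_mul]
    unfold IsPoleAt at hp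
    rw [hp, zero_mul]

lemma evalC_frac {f : RatFunc ℝ} {p q : ℝ[X]} {s : ℂ}
    (hqs : q.eval₂ (algebraMap ℝ ℂ) s ≠ 0)
    (h : f = algebraMap _ _ p / algebraMap _ _ q) :
    evalC f s = p.eval₂ (algebraMap ℝ ℂ) s / q.eval₂ (algebraMap ℝ ℂ) s := by
  have hq : q ≠ 0 := by rintro rfl; simp at hqs
  have hrel := frac_rel hq h
  have hd : f.denom.eval₂ (algebraMap ℝ ℂ) s ≠ 0 := by
    obtain ⟨r, hr⟩ := RatFunc.denom_div_dvd p q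
    rw [← h] at hr
    intro h0
    apply hqs
    rw [hr, eval₂_mul, h0, zero_mul]
  unfold evalC RatFunc.eval
  rw [div_eq_div_iff hd hqs, ← eval₂_mul, ← eval₂_mul, hrel]

lemma RH.eq_frac (f : RatFunc ℝ) :
    f = algebraMap _ _ f.num / algebraMap _ _ f.denom := (RatFunc.num_div_denom f).symm

lemma algMap_ne {q : ℝ[X]} (hq : q ≠ 0) : (algebraMap ℝ[X] (RatFunc ℝ)) q ≠ 0 := by
  simpa using hq

lemma RH.mul {f g : RatFunc ℝ} (hf : RH f) (hg : RH g) : RH (f * g) := by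
  refine RH_of_frac (p := f.num * g.num) (hf.good.mul hg.good) ?_ ?_
  · rw [degree_mul, degree_mul]; exact add_le_add hf.1 hg.1
  · rw [map_mul, map_mul, mul_div_mul_comm, ← RH.eq_frac, ← RH.eq_frac]

lemma RH.add {f g : RatFunc ℝ} (hf : RH f) (hg : RH g) : RH (f + g) := by
  refine RH_of_frac (p := f.num * g.denom + f.denom * g.num) (hf.good.mul hg.good) ?_ ?_
  · refine (degree_add_le _ _).trans (max_le ?_ ?_)
    · rw [degree_mul, degree_mul]; exact add_le_add hf.1 le_rfl
    · rw [degree_mul, degree_mul]; exact add_le_add le_rfl hg.1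
  · rw [map_add, map_mul, map_mul, map_mul,
      ← div_add_div _ _ (algMap_ne f.denom_ne_zero) (algMap_ne g.denom_ne_zero),
      ← RH.eq_frac, ← RH.eq_frac]

lemma RH.const (c : ℝ) : RH (RatFunc.C c) := by
  refine ⟨?_, fun s _ => ?_⟩
  · simp [degree_C_le]
  · simp [IsPoleAt]

lemma RH.neg {f : RatFunc ℝ} (hf : RH f) : RH (-f) := by
  have := (RH.const (-1)).mul hf
  simpa using this

/-- The ring `RH∞`. -/
def RHs : Subring (RatFunc ℝ) where
  carrier := {f | RH f}
  mul_mem' := RH.mul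
  add_mem' := RH.add
  neg_mem' := RH.neg
  one_mem' := by simpa using RH.const 1
  zero_mem' := by simpa using RH.const 0

lemma mem_RHs {f : RatFunc ℝ} : f ∈ RHs ↔ RH f := Iff.rfl

/-- Evaluation at a point of the closed right half plane. -/
def evalHom (s : ℂ) (hs : 0 ≤ s.re) : RHs →+* ℂ where
  toFun f := evalC f.1 s
  map_one' := by simp [evalC]
  map_zero' := by simp [evalC]
  map_add' f g := RatFunc.eval_add _ _ (f.2.2 s hs) (g.2.2 s hs)
  map_mul' f g := RatFunc.eval_mul _ _ (f.2.2 s hs) (g.2.2 s hs)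

lemma evalC_ofReal (f : RatFunc ℝ) (x : ℝ) :
    evalC f (x : ℂ) = ((f.eval (RingHom.id ℝ) x : ℝ) : ℂ) := by
  have key : ∀ p : ℝ[X], p.eval₂ (algebraMap ℝ ℂ) (x : ℂ) = ((p.eval₂ (RingHom.id ℝ) x : ℝ) : ℂ) := by
    intro p
    have := Polynomial.hom_eval₂ p (RingHom.id ℝ) (algebraMap ℝ ℂ) x
    simpa using this.symm
  unfold evalC RatFunc.eval
  rw [key, key]; push_cast; rfl

lemma evalC_conj (f : RatFunc ℝ) (s : ℂ) :
    evalC f (starRingEnd ℂ s) = starRingEnd ℂ (evalC f s) := by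
  have key : ∀ p : ℝ[X], p.eval₂ (algebraMap ℝ ℂ) (starRingEnd ℂ s)
      = starRingEnd ℂ (p.eval₂ (algebraMap ℝ ℂ) s) := by
    intro p
    rw [Polynomial.hom_eval₂]
    congr 1
    ext x; simp
  unfold evalC RatFunc.eval
  rw [key, key, map_div₀]

lemma tendsto_atInfinity {f : RatFunc ℝ} (hf : RH f) :
    Tendsto (fun x : ℝ => f.eval (RingHom.id ℝ) x) atTop (𝓝 (atInfinity f)) := by
  unfold RatFunc.eval atInfinity
  split_ifs with h
  · exact Polynomial.div_tendsto_atTop_leadingCoeff_div_of_degree_eq _ _ h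
  · exact Polynomial.div_tendsto_atTop_zero_of_degree_lt _ _ (lt_of_le_of_ne hf.1 h)

lemma RH.denom_real {f : RatFunc ℝ} (hf : RH f) {x : ℝ} (hx : 0 ≤ x) :
    f.denom.eval₂ (RingHom.id ℝ) x ≠ 0 := by
  intro h
  apply hf.2 (x : ℂ) (by simpa using hx)
  have := Polynomial.hom_eval₂ f.denom (RingHom.id ℝ) (algebraMap ℝ ℂ) x
  unfold IsPoleAt
  rw [h] at this
  simpa using this.symm

lemma atInfinity_unique {f : RatFunc ℝ} (hf : RH f) {a : ℝ}
    (h : Tendsto (fun x : ℝ => f.eval (RingHom.id ℝ) x) atTop (𝓝 a)) : atInfinity f = a :=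
  tendsto_nhds_unique (tendsto_atInfinity hf) h

/-- Evaluation at infinity. -/
def infHom : RHs →+* ℝ where
  toFun f := atInfinity f.1
  map_one' := by simp [atInfinity]
  map_zero' := by simp [atInfinity]
  map_add' f g := by
    apply atInfinity_unique (f + g).2
    refine ((tendsto_atInfinity f.2).add (tendsto_atInfinity g.2)).congr' ?_
    filter_upwards [eventually_ge_atTop 0] with x hx
    exact (RatFunc.eval_add _ _ (RH.denom_real f.2 hx) (RH.denom_real g.2 hx)).symm
  map_mul' f g := by
    apply atInfinity_unique (f * g).2
    refine ((tendsto_atInfinity f.2).mul (tendsto_atInfinity g.2)).congr' ?_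
    filter_upwards [eventually_ge_atTop 0] with x hx
    exact (RatFunc.eval_mul _ _ (RH.denom_real f.2 hx) (RH.denom_real g.2 hx)).symm

lemma atInfinity_frac_zero {f : RatFunc ℝ} {p q : ℝ[X]} (hq : Good q) (hpq : p.degree < q.degree)
    (h : f = algebraMap _ _ p / algebraMap _ _ q) : atInfinity f = 0 := by
  have hf := RH_of_frac hq hpq.le h
  apply atInfinity_unique hf
  refine (Polynomial.div_tendsto_atTop_zero_of_degree_lt p q hpq).congr' ?_
  filter_upwards [eventually_ge_atTop 0] with x hx
  have h1 := evalC_frac (hq (x : ℂ) (by simpa using hx)) h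
  rw [evalC_ofReal] at h1
  have key : ∀ p : ℝ[X], p.eval₂ (algebraMap ℝ ℂ) (x : ℂ) = ((p.eval x : ℝ) : ℂ) := by
    intro p
    have := Polynomial.hom_eval₂ p (RingHom.id ℝ) (algebraMap ℝ ℂ) x
    simpa using this.symm
  rw [key, key] at h1
  exact_mod_cast h1.symm

lemma RH.inv {f : RatFunc ℝ} (h1 : ∀ s : ℂ, 0 ≤ s.re → evalC f s ≠ 0)
    (h2 : atInfinity f ≠ 0) : RH f⁻¹ := by
  refine RH_of_frac (p := f.denom) (q := f.num) ?_ ?_ ?_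
  · intro s hs h0
    apply h1 s hs
    unfold evalC RatFunc.eval
    rw [h0, zero_div]
  · unfold atInfinity at h2
    split_ifs at h2 with h
    · exact h.ge
    · exact absurd rfl h2
  · conv_lhs => rw [RH.eq_frac f]
    rw [inv_div]

/-- Homogenization of a polynomial along the Cayley transform. -/
def hom (N : ℕ) (p : ℝ[X]) (z : ℂ) : ℂ :=
  ∑ i ∈ Finset.range (N + 1), (p.coeff i : ℂ) * (1 + z) ^ i * (1 - z) ^ (N - i)

/-- The Cayley transform. -/
def cay (z : ℂ) : ℂ := (1 + z) / (1 - z)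

lemma hom_eq {N : ℕ} {p : ℝ[X]} (hp : p.natDegree ≤ N) {z : ℂ} (hz : z ≠ 1) :
    hom N p z = (1 - z) ^ N * p.eval₂ (algebraMap ℝ ℂ) (cay z) := by
  have hz' : (1 - z) ≠ 0 := sub_ne_zero.2 (Ne.symm hz)
  rw [Polynomial.eval₂_eq_sum_range' _ (Nat.lt_succ_of_le hp), Finset.mul_sum]
  unfold hom
  refine Finset.sum_congr rfl fun i hi => ?_
  have hi : i ≤ N := by simpa [Nat.lt_succ_iff] using hi
  obtain ⟨k, rfl⟩ := Nat.exists_eq_add_of_le hi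
  unfold cay
  rw [div_pow, pow_add, Nat.add_sub_cancel_left]
  field_simp
  simp [mul_comm]

lemma hom_one (N : ℕ) (p : ℝ[X]) : hom N p 1 = (p.coeff N : ℂ) * 2 ^ N := by
  unfold hom
  rw [Finset.sum_range_succ, Finset.sum_eq_zero]
  · norm_num
  · intro i hi
    have : N - i ≠ 0 := by have := Finset.mem_range.1 hi; omega
    simp [this]

lemma hom_diff (N : ℕ) (p : ℝ[X]) : Differentiable ℂ (hom N p) := by
  unfold hom; fun_prop

/-- Transfer of a rational function to the unit disc. -/
def hat (f : RatFunc ℝ) (z : ℂ) : ℂ :=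
  hom f.denom.natDegree f.num z / hom f.denom.natDegree f.denom z

lemma cay_re (z : ℂ) : (cay z).re = (1 - Complex.normSq z) / Complex.normSq (1 - z) := by
  unfold cay
  rw [Complex.div_re, ← add_div]
  congr 1
  simp [Complex.normSq_apply]
  ring

lemma normSq_le_one {z : ℂ} (hz : ‖z‖ ≤ 1) : Complex.normSq z ≤ 1 := by
  rw [Complex.normSq_eq_norm_sq]; exact pow_le_one₀ (norm_nonneg _) hz

lemma cay_re_nonneg {z : ℂ} (hz : ‖z‖ ≤ 1) : 0 ≤ (cay z).re := by
  rw [cay_re]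
  exact div_nonneg (by linarith [normSq_le_one hz]) (Complex.normSq_nonneg _)

lemma cay_re_zero {z : ℂ} (hz : ‖z‖ = 1) : (cay z).re = 0 := by
  rw [cay_re, Complex.normSq_eq_norm_sq, hz]; simp

lemma RH.natDegree_le {f : RatFunc ℝ} (hf : RH f) : f.num.natDegree ≤ f.denom.natDegree :=
  natDegree_le_natDegree hf.1

lemma hom_denom_ne {f : RatFunc ℝ} (hf : RH f) {z : ℂ} (hz : ‖z‖ ≤ 1) :
    hom f.denom.natDegree f.denom z ≠ 0 := by
  by_cases h : z = 1
  · subst h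
    rw [hom_one]
    have := f.monic_denom
    rw [Polynomial.coeff_natDegree, this.leadingCoeff]
    simp
  · rw [hom_eq le_rfl h]
    exact mul_ne_zero (pow_ne_zero _ (sub_ne_zero.2 (Ne.symm h))) (hf.2 _ (cay_re_nonneg hz))

lemma hat_differentiableAt {f : RatFunc ℝ} (hf : RH f) {z : ℂ} (hz : ‖z‖ ≤ 1) :
    DifferentiableAt ℂ (hat f) z :=
  ((hom_diff _ _) z).div ((hom_diff _ _) z) (hom_denom_ne hf hz)

lemma hat_eq {f : RatFunc ℝ} (hf : RH f) {z : ℂ} (hz : z ≠ 1) :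
    hat f z = evalC f (cay z) := by
  unfold hat
  rw [hom_eq le_rfl hz, hom_eq hf.natDegree_le hz, mul_div_mul_left]
  · rfl
  · exact pow_ne_zero _ (sub_ne_zero.2 (Ne.symm hz))

lemma hat_one {f : RatFunc ℝ} (hf : RH f) : hat f 1 = (atInfinity f : ℂ) := by
  unfold hat
  rw [hom_one, hom_one, mul_div_mul_right _ _ (by simp)]
  unfold atInfinity
  have hd := f.monic_denom
  split_ifs with h
  · have h' : f.num.natDegree = f.denom.natDegree := natDegree_eq_of_degree_eq h
    rw [coeff_natDegree, ← h', coeff_natDegree]; push_cast; rfl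
  · have hlt := lt_of_le_of_ne hf.1 h
    rw [coeff_eq_zero_of_degree_lt]
    · simp
    · rwa [← degree_eq_natDegree f.denom_ne_zero]

/-- Lift a matrix in `RH∞` to a matrix over the ring `RHs`. -/
def lift {m : Type*} [Fintype m] (G : Matrix m m (RatFunc ℝ)) (h : MemRHinf G) :
    Matrix m m RHs :=
  Matrix.of fun i j => ⟨G i j, h.1 i j, fun s hs => h.2 s hs i j⟩

lemma lift_map {m : Type*} [Fintype m] (G : Matrix m m (RatFunc ℝ)) (h : MemRHinf G) :
    (lift G h).map RHs.subtype = G := by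
  ext i j; rfl

lemma mem_of_lift {m : Type*} [Fintype m] (G : Matrix m m RHs) :
    MemRHinf (G.map RHs.subtype) :=
  ⟨fun i j => (G i j).2.1, fun s hs i j => (G i j).2.2 s hs⟩

lemma evalM_lift (G : Matrix (Fin n) (Fin n) (RatFunc ℝ)) (h : MemRHinf G) {s : ℂ}
    (hs : 0 ≤ s.re) : evalM G s = (lift G h).map (evalHom s hs) := by
  ext i j; rfl

lemma evalInf_lift (G : Matrix (Fin n) (Fin n) (RatFunc ℝ)) (h : MemRHinf G) :
    evalInf G = (lift G h).map infHom := by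
  ext i j; rfl

lemma det_eval {R S : Type*} [CommRing R] [CommRing S] (φ : R →+* S)
    (A B : Matrix (Fin n) (Fin n) R) :
    φ (1 - A * B).det = (1 - A.map φ * B.map φ).det := by
  rw [RingHom.map_det]
  congr 1
  rw [map_sub, map_mul, map_one]
  rfl

lemma map_one_sub {R S : Type*} [CommRing R] [CommRing S] (φ : R →+* S)
    (A B : Matrix (Fin n) (Fin n) R) :
    (1 - A * B).map φ = (1 - A.map φ * B.map φ) := by
  have : φ.mapMatrix (1 - A * B) = 1 - φ.mapMatrix A * φ.mapMatrix B := by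
    rw [map_sub, map_mul, map_one]
  exact this

lemma fb_of {P C : Matrix (Fin n) (Fin n) (RatFunc ℝ)} (hP : MemRHinf P) (hC : MemRHinf C)
    (h1 : ∀ s : ℂ, 0 ≤ s.re → (1 - evalM P s * evalM C s).det ≠ 0)
    (h2 : (1 - evalInf P * evalInf C).det ≠ 0) : FeedbackStable P C := by
  set P' := lift P hP with hP'
  set C' := lift C hC with hC'
  set d : RHs := (1 - P' * C').det with hd
  have e1 : ∀ s : ℂ, 0 ≤ s.re → evalC d.1 s ≠ 0 := by
    intro s hs
    have : evalHom s hs d = (1 - evalM P s * evalM C s).det := by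
      rw [hd, det_eval, ← evalM_lift, ← evalM_lift]
    have h3 := h1 s hs
    rw [← this] at h3
    exact h3
  have e2 : atInfinity d.1 ≠ 0 := by
    have : infHom d = (1 - evalInf P * evalInf C).det := by
      rw [hd, det_eval, ← evalInf_lift, ← evalInf_lift]
    rw [← this] at h2
    exact h2
  have hd0 : d.1 ≠ 0 := by
    intro h0
    apply e1 0 (by simp)
    rw [h0]; simp [evalC]
  have hu : IsUnit d := by
    refine IsUnit.of_mul_eq_one ⟨d.1⁻¹, RH.inv e1 e2⟩ ?_
    apply Subtype.ext
    exact mul_inv_cancel₀ hd0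
  have hmap : (1 - P' * C').map RHs.subtype = 1 - P * C := by
    rw [map_one_sub, hP', hC', lift_map, lift_map]
  have hinv : (1 - P * C)⁻¹ = ((1 - P' * C')⁻¹).map RHs.subtype := by
    apply Matrix.inv_eq_right_inv
    rw [← hmap]
    have h4 : (1 - P' * C') * (1 - P' * C')⁻¹ = 1 := Matrix.mul_nonsing_inv _ hu
    have h5 := congrArg (RHs.subtype.mapMatrix) h4
    rw [map_mul, map_one] at h5
    exact h5
  constructor
  · have : RHs.subtype d = (1 - P * C).det := by
      rw [hd, det_eval, hP', hC', lift_map, lift_map]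
    rw [← this]
    exact hd0
  · set X := (1 - P' * C')⁻¹
    have h6 : Matrix.fromBlocks (1 - P * C)⁻¹ ((1 - P * C)⁻¹ * P) (C * (1 - P * C)⁻¹)
        (C * (1 - P * C)⁻¹ * P) =
        (Matrix.fromBlocks X (X * P') (C' * X) (C' * X * P')).map RHs.subtype := by
      rw [hinv, Matrix.fromBlocks_map, Matrix.map_mul, Matrix.map_mul, Matrix.map_mul,
        Matrix.map_mul, hP', hC', lift_map, lift_map]
    rw [h6]
    exact mem_of_lift _

lemma fb_ne {P C : Matrix (Fin n) (Fin n) (RatFunc ℝ)} (hP : MemRHinf P) (hC : MemRHinf C)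
    (h : FeedbackStable P C) (s : ℂ) (hs : 0 ≤ s.re) :
    (1 - evalM P s * evalM C s).det ≠ 0 := by
  obtain ⟨hdet, hR⟩ := h
  have hX : MemRHinf (1 - P * C)⁻¹ := by
    refine ⟨fun i j => ?_, fun s hs i j => ?_⟩
    · exact hR.1 (Sum.inl i) (Sum.inl j)
    · exact hR.2 s hs (Sum.inl i) (Sum.inl j)
  have h1 : (1 - lift P hP * lift C hC) * lift _ hX = 1 := by
    have hinj : Function.Injective (RHs.subtype.mapMatrix (m := Fin n)) := by
      intro A B hAB
      ext i j
      exact congrFun (congrFun hAB i) j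
    apply hinj
    rw [map_mul, map_one]
    change (1 - lift P hP * lift C hC).map RHs.subtype * (lift _ hX).map RHs.subtype = 1
    rw [map_one_sub, lift_map, lift_map, lift_map]
    exact Matrix.mul_nonsing_inv _ (isUnit_iff_ne_zero.2 hdet)
  have h2 := congrArg (fun M => evalHom s hs (Matrix.det M)) h1
  simp only [Matrix.det_mul, map_mul, Matrix.det_one, map_one] at h2
  rw [det_eval, ← evalM_lift, ← evalM_lift] at h2
  exact left_ne_zero_of_mul_eq_one h2

/-- Quadratic form of a complex matrix. -/
def qf (M : Matrix (Fin n) (Fin n) ℂ) (x : Fin n → ℂ) : ℂ := star x ⬝ᵥ (M *ᵥ x)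

lemma qf_conjTranspose (M : Matrix (Fin n) (Fin n) ℂ) (x : Fin n → ℂ) :
    star x ⬝ᵥ (Mᴴ *ᵥ x) = starRingEnd ℂ (qf M x) := by
  unfold qf
  rw [starRingEnd_apply, ← Matrix.star_dotProduct_star, star_star, star_mulVec,
    ← dotProduct_mulVec]

lemma niKer_herm (M : Matrix (Fin n) (Fin n) ℂ) : (niKer M).IsHermitian := by
  unfold niKer Matrix.IsHermitian
  rw [conjTranspose_smul, conjTranspose_sub, conjTranspose_conjTranspose]
  simp
  rw [← smul_neg, neg_sub]

lemma niKer_qf (M : Matrix (Fin n) (Fin n) ℂ) (x : Fin n → ℂ) :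
    star x ⬝ᵥ (niKer M *ᵥ x) = ((-2 * (qf M x).im : ℝ) : ℂ) := by
  unfold niKer
  rw [smul_mulVec, sub_mulVec, dotProduct_smul, dotProduct_sub, qf_conjTranspose]
  change Complex.I • (qf M x - _) = _
  rw [Complex.sub_conj]
  push_cast
  simp only [smul_eq_mul]
  ring_nf
  simp

lemma niKer_posDef_iff (M : Matrix (Fin n) (Fin n) ℂ) :
    (niKer M).PosDef ↔ ∀ x, x ≠ 0 → (qf M x).im < 0 := by
  rw [Matrix.posDef_iff_dotProduct_mulVec]
  simp only [niKer_herm, true_and, niKer_qf]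
  refine forall_congr' fun x => forall_congr' fun _ => ?_
  rw [← Complex.ofReal_zero, Complex.real_lt_real]
  constructor <;> intro h <;> linarith

lemma niKer_posSemidef_iff (M : Matrix (Fin n) (Fin n) ℂ) :
    (niKer M).PosSemidef ↔ ∀ x, (qf M x).im ≤ 0 := by
  rw [Matrix.posSemidef_iff_dotProduct_mulVec]
  simp only [niKer_herm, true_and, niKer_qf]
  refine forall_congr' fun x => ?_
  rw [← Complex.ofReal_zero, Complex.real_le_real]
  constructor <;> intro h <;> linarith


/-- Zero-free homotopy principle on the unit disc. -/
lemma homotopy (F : ℝ → ℂ → ℂ)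
    (hc : ContinuousOn (fun p : ℝ × ℂ => F p.1 p.2) (Set.Icc 0 1 ×ˢ Metric.closedBall 0 1))
    (hd : ∀ τ ∈ Set.Icc (0 : ℝ) 1, ∀ z : ℂ, ‖z‖ ≤ 1 → DifferentiableAt ℂ (F τ) z)
    (hb : ∀ τ ∈ Set.Icc (0 : ℝ) 1, ∀ z : ℂ, ‖z‖ = 1 → F τ z ≠ 0)
    (h0 : ∀ z : ℂ, ‖z‖ ≤ 1 → F 0 z ≠ 0) : ∀ z : ℂ, ‖z‖ ≤ 1 → F 1 z ≠ 0 := by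
  have hK : IsCompact (Set.Icc (0 : ℝ) 1 ×ˢ Metric.closedBall (0 : ℂ) 1) :=
    isCompact_Icc.prod (isCompact_closedBall _ _)
  have hS : IsCompact (Set.Icc (0 : ℝ) 1 ×ˢ Metric.sphere (0 : ℂ) 1) :=
    isCompact_Icc.prod (isCompact_sphere _ _)
  have hsub : Set.Icc (0 : ℝ) 1 ×ˢ Metric.sphere (0 : ℂ) 1 ⊆
      Set.Icc (0 : ℝ) 1 ×ˢ Metric.closedBall (0 : ℂ) 1 :=
    Set.prod_mono le_rfl Metric.sphere_subset_closedBall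
  obtain ⟨δ, hδ, hδb⟩ : ∃ δ > 0, ∀ τ ∈ Set.Icc (0 : ℝ) 1, ∀ z : ℂ, ‖z‖ = 1 → δ ≤ ‖F τ z‖ := by
    have hne : (Set.Icc (0 : ℝ) 1 ×ˢ Metric.sphere (0 : ℂ) 1).Nonempty :=
      ⟨(0, 1), by simp⟩
    obtain ⟨p, hp, hmin⟩ := hS.exists_isMinOn hne (hc.mono hsub).norm
    refine ⟨‖F p.1 p.2‖, norm_pos_iff.2 (hb _ hp.1 _ (by simpa using hp.2)), ?_⟩
    intro τ hτ z hz
    exact hmin (show (τ, z) ∈ _ from ⟨hτ, by simpa using hz⟩)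
  have huc := hK.uniformContinuousOn_of_continuous hc
  obtain ⟨η, hη, hηb⟩ := Metric.uniformContinuousOn_iff.1 huc δ hδ
  have step : ∀ τ ∈ Set.Icc (0 : ℝ) 1, (∀ z : ℂ, ‖z‖ ≤ 1 → F τ z ≠ 0) →
      ∀ σ ∈ Set.Icc (0 : ℝ) 1, |σ - τ| < η → ∀ z : ℂ, ‖z‖ ≤ 1 → F σ z ≠ 0 := by
    intro τ hτ hne σ hσ hστ z hz hzero
    have hlow : δ ≤ ‖F τ z‖ := by
      have hmax := Complex.norm_le_of_forall_mem_frontier_norm_le (f := fun w => (F τ w)⁻¹)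
        (U := Metric.ball (0 : ℂ) 1) (C := δ⁻¹) Metric.isBounded_ball ?_ ?_ (z := z) ?_
      · rw [norm_inv] at hmax
        exact (inv_le_inv₀ (norm_pos_iff.2 (hne z hz)) hδ).1 hmax
      · apply DifferentiableOn.diffContOnCl
        rw [closure_ball _ one_ne_zero]
        intro w hw
        have hw' : ‖w‖ ≤ 1 := by simpa using hw
        exact ((hd τ hτ w hw').inv (hne w hw')).differentiableWithinAt
      · intro w hw
        rw [frontier_ball _ one_ne_zero] at hw
        have hw' : ‖w‖ = 1 := by simpa using hw
        rw [norm_inv]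
        exact inv_anti₀ hδ (hδb τ hτ w hw')
      · rw [closure_ball _ one_ne_zero]
        simpa using hz
    have := hηb (σ, z) ⟨hσ, by simpa using hz⟩ (τ, z) ⟨hτ, by simpa using hz⟩
      (by simpa [Prod.dist_eq, Real.dist_eq] using hστ)
    simp only [hzero, dist_zero_left] at this
    linarith
  obtain ⟨N, hN⟩ := exists_nat_gt (1 / η)
  have hN0 : (0 : ℝ) < N := lt_trans (by positivity) hN
  have hstep : 1 / (N : ℝ) < η := by
    rw [div_lt_iff₀ hN0]; rw [div_lt_iff₀ hη] at hN; linarith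
  have ind : ∀ k : ℕ, k ≤ N → ∀ z : ℂ, ‖z‖ ≤ 1 → F ((k : ℝ) / N) z ≠ 0 := by
    intro k
    induction k with
    | zero => intro _ z hz; simpa using h0 z hz
    | succ k ih =>
      intro hk
      have hmem : ∀ j : ℕ, j ≤ N → ((j : ℝ) / N) ∈ Set.Icc (0 : ℝ) 1 := by
        intro j hj
        refine ⟨by positivity, ?_⟩
        rw [div_le_one hN0]; exact_mod_cast hj
      refine step _ (hmem k (by omega)) (ih (by omega)) _ (hmem _ hk) ?_
      have : ((k + 1 : ℕ) : ℝ) / N - (k : ℝ) / N = 1 / N := by push_cast; ring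
      rw [this, abs_of_pos (by positivity)]
      exact hstep
  have := ind N le_rfl
  rwa [div_self hN0.ne'] at this

lemma cay_surj {s : ℂ} (hs : 0 ≤ s.re) : ∃ z : ℂ, ‖z‖ ≤ 1 ∧ z ≠ 1 ∧ cay z = s := by
  have h1 : s + 1 ≠ 0 := by
    intro h
    have := congrArg Complex.re h
    simp at this
    linarith
  refine ⟨(s - 1) / (s + 1), ?_, ?_, ?_⟩
  · rw [norm_div, div_le_one (norm_pos_iff.2 h1)]
    apply le_of_sq_le_sq _ (norm_nonneg _) |>.trans le_rfl
    rw [← Complex.normSq_eq_norm_sq, ← Complex.normSq_eq_norm_sq]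
    simp [Complex.normSq_apply]
    nlinarith
  · intro h
    rw [div_eq_one_iff_eq h1] at h
    have := congrArg Complex.re h
    simp at this
    linarith
  · unfold cay
    have e1 : 1 + (s - 1) / (s + 1) = 2 * s / (s + 1) := by field_simp; ring
    have e2 : 1 - (s - 1) / (s + 1) = 2 / (s + 1) := by field_simp; ring
    rw [e1, e2]
    field_simp

/-- Max principle: nonnegative real part on the imaginary axis and infinity propagates. -/
lemma re_nonneg {f : RatFunc ℝ} (hf : RH f) (h1 : ∀ ω : ℝ, 0 ≤ (evalC f (jw ω)).re)
    (h2 : 0 ≤ atInfinity f) {s : ℂ} (hs : 0 ≤ s.re) : 0 ≤ (evalC f s).re := by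
  obtain ⟨z, hz, hz1, rfl⟩ := cay_surj hs
  rw [← hat_eq hf hz1]
  have hmax := Complex.norm_le_of_forall_mem_frontier_norm_le (f := fun w => Complex.exp (-(hat f w)))
    (U := Metric.ball (0 : ℂ) 1) (C := 1) Metric.isBounded_ball ?_ ?_ (z := z) ?_
  · rw [Complex.norm_exp] at hmax
    simpa using hmax
  · apply DifferentiableOn.diffContOnCl
    rw [closure_ball _ one_ne_zero]
    intro w hw
    have hw' : ‖w‖ ≤ 1 := by simpa using hw
    exact ((hat_differentiableAt hf hw').neg.cexp).differentiableWithinAt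
  · intro w hw
    rw [frontier_ball _ one_ne_zero] at hw
    have hw' : ‖w‖ = 1 := by simpa using hw
    rw [Complex.norm_exp]
    simp only [Real.exp_le_one_iff, Complex.neg_re, Left.neg_nonpos_iff]
    by_cases hw1 : w = 1
    · subst hw1
      rw [hat_one hf]; simpa using h2
    · rw [hat_eq hf hw1]
      have : cay w = jw (cay w).im := by
        unfold jw
        apply Complex.ext <;> simp [cay_re_zero hw']
      rw [this]
      exact h1 _
  · rw [closure_ball _ one_ne_zero]
    simpa using hz

lemma evalC_continuousAt {f : RatFunc ℝ} (hf : RH f) {s : ℂ} (hs : 0 ≤ s.re) :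
    ContinuousAt (evalC f) s := by
  unfold evalC RatFunc.eval
  have key : ∀ p : ℝ[X], Continuous (fun s : ℂ => p.eval₂ (algebraMap ℝ ℂ) s) := by
    intro p
    simp_rw [Polynomial.eval₂_eq_eval_map]
    exact Polynomial.continuous _
  exact (key _).continuousAt.div (key _).continuousAt (hf.2 s hs)

lemma jw_re (ω : ℝ) : (jw ω).re = 0 := by simp [jw]

lemma jw_neg (ω : ℝ) : jw (-ω) = starRingEnd ℂ (jw ω) := by simp [jw]

lemma jw_tendsto : Tendsto jw (𝓝[>] 0) (𝓝 (0 : ℂ)) := by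
  have : Continuous jw := by unfold jw; fun_prop
  have h := this.tendsto 0
  have h0 : jw 0 = 0 := by simp [jw]
  rw [h0] at h
  exact h.mono_left nhdsWithin_le_nhds

/-- The scalar gain inequality. -/
lemma scalar_gain {g : RatFunc ℝ} (hg : RH g) (h : ∀ ω : ℝ, 0 < ω → (evalC g (jw ω)).im ≤ 0) :
    atInfinity g ≤ g.eval (RingHom.id ℝ) 0 := by
  set g0 := g.eval (RingHom.id ℝ) 0 with hg0
  set p := g.num with hp
  set q := g.denom with hq
  have hq0 : q.eval 0 ≠ 0 := by
    have := RH.denom_real hg le_rfl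
    rwa [← Polynomial.eval₂_id]
  have hX : (Polynomial.X : ℝ[X]) ∣ Polynomial.C g0 * q - p := by
    rw [Polynomial.X_dvd_iff, Polynomial.coeff_zero_eq_eval_zero]
    have : g0 = p.eval 0 / q.eval 0 := by
      rw [hg0]; unfold RatFunc.eval; rw [Polynomial.eval₂_id, Polynomial.eval₂_id]
    simp only [eval_sub, eval_mul, eval_C]
    rw [this]; field_simp; simp
  obtain ⟨r, hr⟩ := hX
  have hdeg : r.degree < q.degree := by
    by_cases hr0 : r = 0
    · rw [hr0, degree_zero, bot_lt_iff_ne_bot]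
      simpa using g.denom_ne_zero
    have h1 : (Polynomial.C g0 * q - p).degree ≤ q.degree := by
      refine (degree_sub_le _ _).trans (max_le ?_ hg.1)
      refine (degree_mul_le _ _).trans ?_
      calc _ ≤ 0 + q.degree := by gcongr; exact degree_C_le
        _ = q.degree := zero_add _
    rw [hr, degree_mul, degree_X] at h1
    have : r.degree < 1 + r.degree := by
      rw [degree_eq_natDegree hr0]; norm_cast; omega
    exact lt_of_lt_of_le this h1
  set hh : RatFunc ℝ := algebraMap _ _ r / algebraMap _ _ q with hhd
  have hgood : Good q := hg.good
  have hhRH : RH hh := RH_of_frac hgood hdeg.le hhd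
  have hinf : atInfinity hh = 0 := atInfinity_frac_zero hgood hdeg hhd
  have hrel : ∀ s : ℂ, 0 ≤ s.re → s * evalC hh s = g0 - evalC g s := by
    intro s hs
    have hqs := hgood s hs
    rw [evalC_frac hqs hhd, evalC_frac hqs (RH.eq_frac g)]
    have h2 := congrArg (fun P => P.eval₂ (algebraMap ℝ ℂ) s) hr
    simp only [eval₂_sub, eval₂_mul, eval₂_C, eval₂_X] at h2
    field_simp
    rw [← h2]; simp [hp, mul_comm]
  have hpos : ∀ ω : ℝ, 0 < ω → 0 ≤ (evalC hh (jw ω)).re := by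
    intro ω hω
    have h3 := congrArg Complex.im (hrel (jw ω) (by rw [jw_re]))
    have h4 := h ω hω
    simp [jw] at h3 h4 ⊢
    by_contra hneg
    push Not at hneg
    nlinarith
  have hre : ∀ ω : ℝ, 0 ≤ (evalC hh (jw ω)).re := by
    intro ω
    rcases lt_trichotomy ω 0 with hω | hω | hω
    · have := hpos (-ω) (by linarith)
      rw [jw_neg, evalC_conj] at this
      simpa using this
    · subst hω
      have h0 : jw 0 = 0 := by simp [jw]
      rw [h0]
      have hcont : Tendsto (fun ω => (evalC hh (jw ω)).re) (𝓝[>] 0) (𝓝 (evalC hh 0).re) :=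
        (Complex.continuous_re.tendsto _).comp
          ((evalC_continuousAt hhRH (s := 0) (by simp)).tendsto.comp jw_tendsto)
      refine ge_of_tendsto hcont ?_
      filter_upwards [self_mem_nhdsWithin] with w hw using hpos w hw
    · exact hpos ω hω
  refine le_of_tendsto (tendsto_atInfinity hg) ?_
  filter_upwards [eventually_ge_atTop 0] with x hx
  have h5 := re_nonneg hhRH hre hinf.ge (s := (x : ℂ)) (by simpa using hx)
  have h6 := congrArg Complex.re (hrel (x : ℂ) (by simpa using hx))
  rw [evalC_ofReal] at h5 h6
  rw [evalC_ofReal] at h6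
  simp at h5 h6
  nlinarith

/-- Transfer of a matrix to the unit disc. -/
def hatM (G : Matrix (Fin n) (Fin n) (RatFunc ℝ)) (z : ℂ) : Matrix (Fin n) (Fin n) ℂ :=
  Matrix.of fun i j => hat (G i j) z

lemma MemRHinf.entry {G : Matrix (Fin n) (Fin n) (RatFunc ℝ)} (h : MemRHinf G) (i j : Fin n) :
    RH (G i j) := ⟨h.1 i j, fun s hs => h.2 s hs i j⟩

lemma ns_jw {P C : Matrix (Fin n) (Fin n) ℂ} (hP : (niKer P).PosDef) (hC : (niKer C).PosSemidef)
    {τ : ℝ} (hτ : 0 ≤ τ) : (1 - (τ : ℂ) • (P * C)).det ≠ 0 := by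
  intro hdet
  obtain ⟨x, hx, hx0⟩ := Matrix.exists_mulVec_eq_zero_iff.2 hdet
  rw [niKer_posDef_iff] at hP
  rw [niKer_posSemidef_iff] at hC
  rw [sub_mulVec, one_mulVec, sub_eq_zero, smul_mulVec, ← mulVec_mulVec] at hx0
  have hy : C *ᵥ x ≠ 0 := by
    intro h
    rw [h] at hx0
    simp at hx0
    exact hx hx0
  have h1 := hP _ hy
  have h2 := hC x
  have h3 : (τ : ℂ) * qf P (C *ᵥ x) = starRingEnd ℂ (qf C x) := by
    unfold qf
    rw [starRingEnd_apply, ← Matrix.star_dotProduct_star, star_star]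
    have h5 : star (C *ᵥ x) ⬝ᵥ x = star (C *ᵥ x) ⬝ᵥ ((τ : ℂ) • P *ᵥ C *ᵥ x) :=
      congrArg _ hx0
    rw [h5, dotProduct_smul, smul_eq_mul]
  have h4 := congrArg Complex.im h3
  simp at h4
  have hτ0 : τ = 0 := by
    by_contra hne
    have : 0 < τ := lt_of_le_of_ne hτ (Ne.symm hne)
    nlinarith
  rw [hτ0] at hx0
  simp at hx0
  exact hx hx0

lemma ns_real {P C : Matrix (Fin n) (Fin n) ℝ} {γ : ℝ} (hγ : 0 < γ) (hP : P.PosSemidef)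
    (hP2 : ∀ x, x ⬝ᵥ (P *ᵥ x) ≤ γ * (x ⬝ᵥ x))
    (hC : ∀ x, x ≠ 0 → x ⬝ᵥ (C *ᵥ x) < γ⁻¹ * (x ⬝ᵥ x))
    {τ : ℝ} (hτ : 0 ≤ τ) (hτ1 : τ ≤ 1) : (1 - τ • (P * C)).det ≠ 0 := by
  intro hdet
  obtain ⟨x, hx, hx0⟩ := Matrix.exists_mulVec_eq_zero_iff.2 hdet
  rw [sub_mulVec, one_mulVec, sub_eq_zero, smul_mulVec, ← mulVec_mulVec] at hx0
  set y := C *ᵥ x with hy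
  set z := P *ᵥ y with hz
  have hsymm : ∀ v w : Fin n → ℝ, v ⬝ᵥ (P *ᵥ w) = w ⬝ᵥ (P *ᵥ v) := by
    intro v w
    have hh : Pᵀ = P := hP.isHermitian
    rw [dotProduct_mulVec, ← mulVec_transpose, hh, dotProduct_comm]
  have h1 : 0 ≤ (y - γ⁻¹ • z) ⬝ᵥ (P *ᵥ (y - γ⁻¹ • z)) := by
    simpa using hP.dotProduct_mulVec_nonneg (y - γ⁻¹ • z)
  have h1' : (y - γ⁻¹ • z) ⬝ᵥ (P *ᵥ (y - γ⁻¹ • z)) =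
      y ⬝ᵥ z - 2 * γ⁻¹ * (z ⬝ᵥ z) + γ⁻¹ ^ 2 * (z ⬝ᵥ (P *ᵥ z)) := by
    simp only [mulVec_sub, mulVec_smul, sub_dotProduct, dotProduct_sub, smul_dotProduct,
      dotProduct_smul, smul_eq_mul]
    rw [hsymm y z, ← hz]
    ring
  have h2 := hP2 z
  have h3 : z ⬝ᵥ z ≤ γ * (y ⬝ᵥ z) := by
    rw [h1'] at h1
    have h4 : γ⁻¹ ^ 2 * (z ⬝ᵥ (P *ᵥ z)) ≤ γ⁻¹ * (z ⬝ᵥ z) := by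
      calc _ ≤ γ⁻¹ ^ 2 * (γ * (z ⬝ᵥ z)) := by gcongr
        _ = _ := by field_simp
    have h5 : γ⁻¹ * (z ⬝ᵥ z) ≤ y ⬝ᵥ z := by linarith
    calc z ⬝ᵥ z = γ * (γ⁻¹ * (z ⬝ᵥ z)) := by field_simp
      _ ≤ _ := by gcongr
  have h6 := hC x hx
  have h7 : x ⬝ᵥ y = τ * (y ⬝ᵥ z) := by
    conv_lhs => rw [hx0]
    rw [smul_dotProduct, smul_eq_mul, dotProduct_comm]
  have h8 : x ⬝ᵥ x = τ ^ 2 * (z ⬝ᵥ z) := by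
    rw [hx0, smul_dotProduct, dotProduct_smul, smul_eq_mul, smul_eq_mul]; ring
  have h9 : 0 ≤ y ⬝ᵥ z := by simpa using hP.dotProduct_mulVec_nonneg y
  rw [← hy, h7, h8] at h6
  have h10 : γ⁻¹ * (τ ^ 2 * (z ⬝ᵥ z)) ≤ γ⁻¹ * (τ ^ 2 * (γ * (y ⬝ᵥ z))) := by gcongr
  have h11 : γ⁻¹ * (τ ^ 2 * (γ * (y ⬝ᵥ z))) = τ ^ 2 * (y ⬝ᵥ z) := by field_simp
  have h12 : τ ^ 2 * (y ⬝ᵥ z) ≤ τ * (y ⬝ᵥ z) := by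
    gcongr
    nlinarith
  linarith

lemma evalR_map (G : Matrix (Fin n) (Fin n) (RatFunc ℝ)) :
    evalM G 0 = (evalR G 0).map (algebraMap ℝ ℂ) := by
  ext i j
  have := evalC_ofReal (G i j) 0
  simpa [evalM, evalR] using this

lemma matrix_gain {G : Matrix (Fin n) (Fin n) (RatFunc ℝ)} (hG : MemRHinf G)
    (h : ∀ ω : ℝ, 0 < ω → (niKer (evalM G (jw ω))).PosSemidef) (x : Fin n → ℝ) :
    x ⬝ᵥ (evalInf G *ᵥ x) ≤ x ⬝ᵥ (evalR G 0 *ᵥ x) := by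
  set c : Fin n → RHs := fun i => ⟨RatFunc.C (x i), RH.const _⟩ with hc
  set g : RHs := ∑ i, c i * ∑ j, lift G hG i j * c j with hg
  have hev : ∀ s : ℂ, 0 ≤ s.re →
      evalC g.1 s = ∑ i, (x i : ℂ) * ∑ j, evalC (G i j) s * (x j : ℂ) := by
    intro s hs
    change evalHom s hs g = _
    have hcs : ∀ i, evalHom s hs (c i) = (x i : ℂ) := by
      intro i
      change evalC (RatFunc.C (x i)) s = _
      simp [evalC]
    rw [hg]
    simp only [map_sum, map_mul, hcs]
    rfl
  have hinf : atInfinity g.1 = x ⬝ᵥ (evalInf G *ᵥ x) := by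
    change infHom g = _
    have hcs : ∀ i, infHom (c i) = x i := by
      intro i
      change atInfinity (RatFunc.C (x i)) = _
      apply atInfinity_unique (RH.const _)
      simp
    rw [hg]
    simp only [map_sum, map_mul, hcs]
    rfl
  have h0 : g.1.eval (RingHom.id ℝ) 0 = x ⬝ᵥ (evalR G 0 *ᵥ x) := by
    have h1 := evalC_ofReal g.1 0
    rw [hev _ (by simp)] at h1
    simp_rw [evalC_ofReal] at h1
    have h2 : ((∑ i, x i * ∑ j, (G i j).eval (RingHom.id ℝ) 0 * x j : ℝ) : ℂ)
        = ((g.1.eval (RingHom.id ℝ) 0 : ℝ) : ℂ) := by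
      rw [← h1]; push_cast; rfl
    rw [← Complex.ofReal_injective h2]
    rfl
  rw [← hinf, ← h0]
  apply scalar_gain g.2
  intro ω hω
  have h3 := (niKer_posSemidef_iff _).1 (h ω hω) (fun i => (x i : ℂ))
  rw [hev _ (by rw [jw_re])]
  have h4 : qf (evalM G (jw ω)) (fun i => (x i : ℂ)) =
      ∑ i, (x i : ℂ) * ∑ j, evalC (G i j) (jw ω) * (x j : ℂ) := by
    unfold qf
    simp [dotProduct, mulVec, evalM]
  rwa [← h4]

lemma evalM_conj (G : Matrix (Fin n) (Fin n) (RatFunc ℝ)) (s : ℂ) :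
    evalM G (starRingEnd ℂ s) = (evalM G s).map (starRingEnd ℂ) := by
  ext i j
  exact evalC_conj _ _

lemma det_smul_map {R S : Type*} [CommRing R] [CommRing S] (φ : R →+* S)
    (A B : Matrix (Fin n) (Fin n) R) (t : R) :
    φ (1 - t • (A * B)).det = (1 - φ t • (A.map φ * B.map φ)).det := by
  rw [RingHom.map_det]
  congr 1
  rw [map_sub, map_one]
  congr 1
  ext i j
  simp [Matrix.mul_apply]

lemma hat_det_cont {P C : Matrix (Fin n) (Fin n) (RatFunc ℝ)} (hP : MemRHinf P)
    (hC : MemRHinf C) :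
    ContinuousOn (fun p : ℝ × ℂ => (1 - (p.1 : ℂ) • (hatM P p.2 * hatM C p.2)).det)
      (Set.Icc 0 1 ×ˢ Metric.closedBall 0 1) := by
  have hG : ∀ f : RatFunc ℝ, RH f →
      ContinuousOn (fun p : ℝ × ℂ => hat f p.2) (Set.Icc 0 1 ×ˢ Metric.closedBall 0 1) := by
    intro f hf p hp
    have h1 := (hat_differentiableAt hf (z := p.2) (by simpa using hp.2)).continuousAt
    exact (ContinuousAt.comp (f := fun p : ℝ × ℂ => p.2) h1 continuousAt_snd).continuousWithinAt
  simp only [Matrix.det_apply]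
  refine continuousOn_finsetSum _ fun σ _ => ?_
  refine ContinuousOn.const_smul ?_ _
  refine continuousOn_finsetProd _ fun i _ => ?_
  simp only [Matrix.sub_apply, Matrix.smul_apply, Matrix.mul_apply, smul_eq_mul]
  refine continuousOn_const.sub (ContinuousOn.mul ?_ ?_)
  · exact (Complex.continuous_ofReal.comp continuous_fst).continuousOn
  · refine continuousOn_finsetSum _ fun k _ => ?_
    exact (hG _ (hP.entry _ _)).mul (hG _ (hC.entry _ _))

lemma hat_det_diff {P C : Matrix (Fin n) (Fin n) (RatFunc ℝ)} (hP : MemRHinf P)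
    (hC : MemRHinf C) (τ : ℝ) {z : ℂ} (hz : ‖z‖ ≤ 1) :
    DifferentiableAt ℂ (fun z => (1 - (τ : ℂ) • (hatM P z * hatM C z)).det) z := by
  have hPd : ∀ i j, DifferentiableAt ℂ (hat (P i j)) z :=
    fun i j => hat_differentiableAt (hP.entry i j) hz
  have hCd : ∀ i j, DifferentiableAt ℂ (hat (C i j)) z :=
    fun i j => hat_differentiableAt (hC.entry i j) hz
  simp only [Matrix.det_apply]
  refine DifferentiableAt.fun_sum fun σ _ => ?_
  refine DifferentiableAt.const_smul ?_ _
  refine DifferentiableAt.fun_finsetProd fun i _ => ?_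
  simp only [Matrix.sub_apply, Matrix.smul_apply, Matrix.mul_apply, smul_eq_mul]
  refine (differentiableAt_const _).sub (DifferentiableAt.const_mul ?_ _)
  refine DifferentiableAt.fun_sum fun k _ => ?_
  exact (hPd _ _).mul (hCd _ _)

lemma sufficiency {P C : Matrix (Fin n) (Fin n) (RatFunc ℝ)} (hC : MemRHinf C)
    {γ : ℝ} (hγ : 0 < γ) (hP : IsSNI P) (hPinf : (evalInf P).PosSemidef)
    (hP0 : LoewnerLE (evalR P 0) (γ • 1))
    (hNI : ∀ ω : ℝ, 0 < ω → (niKer (evalM C (jw ω))).PosSemidef)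
    (hC0 : LoewnerLT (evalR C 0) (γ⁻¹ • 1)) : FeedbackStable P C := by
  have hgP := matrix_gain hP.1 (fun ω hω => (hP.2 ω hω).posSemidef)
  have hgC := matrix_gain hC hNI
  have hP0' : ∀ x, x ⬝ᵥ (evalR P 0 *ᵥ x) ≤ γ * (x ⬝ᵥ x) := by
    intro x
    have := hP0.dotProduct_mulVec_nonneg x
    simp [sub_mulVec, smul_mulVec, dotProduct_sub] at this
    linarith
  have hPsd : (evalR P 0).PosSemidef := by
    refine Matrix.PosSemidef.of_dotProduct_mulVec_nonneg ?_ ?_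
    · have h1 := hP0.isHermitian
      have h2 : (γ • (1 : Matrix (Fin n) (Fin n) ℝ)).IsHermitian := by
        unfold Matrix.IsHermitian; simp
      have h3 := h2.sub h1
      rwa [sub_sub_cancel] at h3
    · intro x
      have h1 := hPinf.dotProduct_mulVec_nonneg x
      simp only [star_trivial] at h1 ⊢
      exact h1.trans (hgP x)
  have hC0' : ∀ x, x ≠ 0 → x ⬝ᵥ (evalR C 0 *ᵥ x) < γ⁻¹ * (x ⬝ᵥ x) := by
    intro x hx
    have := hC0.dotProduct_mulVec_pos hx
    simp [sub_mulVec, smul_mulVec, dotProduct_sub] at this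
    linarith
  have main0 : ∀ τ ∈ Set.Icc (0 : ℝ) 1, (1 - τ • (evalR P 0 * evalR C 0)).det ≠ 0 :=
    fun τ hτ => ns_real hγ hPsd hP0' hC0' hτ.1 hτ.2
  have maininf : ∀ τ ∈ Set.Icc (0 : ℝ) 1, (1 - τ • (evalInf P * evalInf C)).det ≠ 0 :=
    fun τ hτ => ns_real hγ hPinf (fun x => (hgP x).trans (hP0' x))
      (fun x hx => lt_of_le_of_lt (hgC x) (hC0' x hx)) hτ.1 hτ.2
  have mainpos : ∀ τ ∈ Set.Icc (0 : ℝ) 1, ∀ ω : ℝ, 0 < ω →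
      (1 - (τ : ℂ) • (evalM P (jw ω) * evalM C (jw ω))).det ≠ 0 :=
    fun τ hτ ω hω => ns_jw (hP.2 ω hω) (hNI ω hω) hτ.1
  have mainjw : ∀ τ ∈ Set.Icc (0 : ℝ) 1, ∀ ω : ℝ,
      (1 - (τ : ℂ) • (evalM P (jw ω) * evalM C (jw ω))).det ≠ 0 := by
    intro τ hτ ω
    rcases lt_trichotomy ω 0 with hω | hω | hω
    · have h1 := mainpos τ hτ (-ω) (by linarith)
      have h2 : jw ω = starRingEnd ℂ (jw (-ω)) := by rw [← jw_neg, neg_neg]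
      rw [h2, evalM_conj, evalM_conj]
      have h3 := det_smul_map (starRingEnd ℂ) (evalM P (jw (-ω))) (evalM C (jw (-ω))) (τ : ℂ)
      rw [Complex.conj_ofReal] at h3
      rw [← h3]
      simpa using h1
    · subst hω
      have h0 : jw 0 = 0 := by simp [jw]
      rw [h0, evalR_map, evalR_map]
      have h3 := det_smul_map (algebraMap ℝ ℂ) (evalR P 0) (evalR C 0) τ
      intro h4
      apply main0 τ hτ
      rw [← Complex.coe_algebraMap, ← h3] at h4
      simpa using h4
    · exact mainpos τ hτ ω hω
  have hone : ∀ G : Matrix (Fin n) (Fin n) (RatFunc ℝ), MemRHinf G →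
      hatM G 1 = (evalInf G).map (algebraMap ℝ ℂ) := by
    intro G hG
    ext i j
    exact hat_one (hG.entry i j)
  have hcay : ∀ G : Matrix (Fin n) (Fin n) (RatFunc ℝ), MemRHinf G → ∀ z : ℂ, z ≠ 1 →
      hatM G z = evalM G (cay z) := by
    intro G hG z hz
    ext i j
    exact hat_eq (hG.entry i j) hz
  have key := homotopy (fun τ z => (1 - (τ : ℂ) • (hatM P z * hatM C z)).det) ?_ ?_ ?_ ?_
  · apply fb_of hP.1 hC
    · intro s hs
      obtain ⟨z, hz, hz1, rfl⟩ := cay_surj hs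
      have := key z hz
      simpa [hcay P hP.1 z hz1, hcay C hC z hz1] using this
    · simpa using maininf 1 (by simp)
  · exact hat_det_cont hP.1 hC
  · intro τ _ z hz
    exact hat_det_diff hP.1 hC τ hz
  · intro τ hτ z hz
    by_cases hz1 : z = 1
    · subst hz1
      rw [hone P hP.1, hone C hC]
      have h3 := det_smul_map (algebraMap ℝ ℂ) (evalInf P) (evalInf C) τ
      intro h4
      apply maininf τ hτ
      rw [← Complex.coe_algebraMap, ← h3] at h4
      simpa using h4
    · rw [hcay P hP.1 z hz1, hcay C hC z hz1]
      have : cay z = jw (cay z).im := by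
        unfold jw
        apply Complex.ext <;> simp [cay_re_zero hz]
      rw [this]
      exact mainjw τ hτ _
  · intro z _
    simp

lemma small_mul (c : ℝ) {ε : ℝ} (hε : 0 < ε) : ∀ᶠ k : ℝ in 𝓝[>] 0, k * c < ε := by
  have h : Tendsto (fun k : ℝ => k * c) (𝓝[>] 0) (𝓝 (0 * c)) :=
    ((continuous_id.mul continuous_const).tendsto 0).mono_left nhdsWithin_le_nhds
  rw [zero_mul] at h
  exact h.eventually_lt_const hε

lemma small_sq_mul (c : ℝ) {ε : ℝ} (hε : 0 < ε) : ∀ᶠ k : ℝ in 𝓝[>] 0, k ^ 2 * c < ε := by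
  have h : Tendsto (fun k : ℝ => k ^ 2 * c) (𝓝[>] 0) (𝓝 (0 ^ 2 * c)) :=
    (((continuous_id.pow 2).mul continuous_const).tendsto 0).mono_left nhdsWithin_le_nhds
  rw [zero_pow two_ne_zero, zero_mul] at h
  exact h.eventually_lt_const hε

/-- The scalar estimate behind the resonance construction. -/
lemma scalar_est {ω₀ κ b U : ℝ} (m : ℝ) (hω₀ : 0 < ω₀) (hκ : 0 < κ) (hb : 0 < b) (hU : 0 ≤ U) :
    ∀ᶠ k : ℝ in 𝓝[>] 0, ∀ ω : ℝ, 0 < ω →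
      k ^ 2 * (b * U / (2 * ω₀ ^ 2)) * (ω - ω₀) * (1 + ω ^ 2) <
        κ * ((ω₀ ^ 2 + k * m - ω ^ 2) ^ 2 + (ω * (k * b / ω₀)) ^ 2) := by
  set L : ℝ := b * U / (2 * ω₀ ^ 2) * (1 / ω₀) * (1 + 1 / ω₀ ^ 2) with hL
  have hL0 : 0 ≤ L := by positivity
  set c : ℝ := κ * (b / ω₀) ^ 2 with hc
  have hc0 : 0 < c := by positivity
  set δ : ℝ := c / (L + 1) with hδ
  have hδ0 : 0 < δ := by positivity
  have hLδ : L * δ < c := by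
    rw [hδ, mul_div_assoc', div_lt_iff₀ (by positivity)]
    nlinarith
  filter_upwards [self_mem_nhdsWithin, small_mul |m| (half_pos hδ0),
    small_sq_mul (L * (1 + ω₀ ^ 2 / δ)) (ε := κ / 4) (by positivity)] with k hk h1 h2 ω hω
  have hk : 0 < k := hk
  have hRHS : κ * ((ω₀ ^ 2 + k * m - ω ^ 2) ^ 2 + (ω * (k * b / ω₀)) ^ 2) =
      κ * (ω₀ ^ 2 + k * m - ω ^ 2) ^ 2 + k ^ 2 * c * ω ^ 2 := by
    rw [hc]; field_simp
  rw [hRHS]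
  have hpos : 0 < k ^ 2 * c * ω ^ 2 := by positivity
  have hsq : 0 ≤ κ * (ω₀ ^ 2 + k * m - ω ^ 2) ^ 2 := by positivity
  rcases le_or_gt ω ω₀ with hle | hlt
  · have : k ^ 2 * (b * U / (2 * ω₀ ^ 2)) * (ω - ω₀) * (1 + ω ^ 2) ≤ 0 := by
      apply mul_nonpos_of_nonpos_of_nonneg _ (by positivity)
      exact mul_nonpos_of_nonneg_of_nonpos (by positivity) (by linarith)
    linarith
  · set v := ω ^ 2 - ω₀ ^ 2 with hv
    have hv0 : 0 < v := by nlinarith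
    have e1 : ω - ω₀ ≤ 1 / ω₀ * v := by
      rw [one_div, inv_mul_eq_div, le_div_iff₀ hω₀]; nlinarith
    have e2 : 1 + ω ^ 2 ≤ (1 + 1 / ω₀ ^ 2) * ω ^ 2 := by
      have : 1 ≤ 1 / ω₀ ^ 2 * ω ^ 2 := by
        rw [one_div, inv_mul_eq_div, le_div_iff₀ (by positivity)]; nlinarith
      linarith
    have hLHS : k ^ 2 * (b * U / (2 * ω₀ ^ 2)) * (ω - ω₀) * (1 + ω ^ 2) ≤ k ^ 2 * L * v * ω ^ 2 := by
      calc _ ≤ k ^ 2 * (b * U / (2 * ω₀ ^ 2)) * (1 / ω₀ * v) * ((1 + 1 / ω₀ ^ 2) * ω ^ 2) := by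
            gcongr
        _ = _ := by rw [hL]; ring
    refine lt_of_le_of_lt hLHS ?_
    rcases le_or_gt v δ with hvδ | hvδ
    · have : k ^ 2 * L * v * ω ^ 2 ≤ k ^ 2 * ω ^ 2 * (L * δ) := by
        calc _ = k ^ 2 * ω ^ 2 * (L * v) := by ring
          _ ≤ _ := by gcongr
      have h3 : k ^ 2 * ω ^ 2 * (L * δ) < k ^ 2 * ω ^ 2 * c := by gcongr
      linarith
    · have hkm : k * m ≤ k * |m| := by gcongr; exact le_abs_self m
      have h3 : v / 2 ≤ v - k * m := by linarith
      have h4 : (v / 2) ^ 2 ≤ (v - k * m) ^ 2 := by gcongr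
      have h5 : (ω₀ ^ 2 + k * m - ω ^ 2) ^ 2 = (v - k * m) ^ 2 := by rw [hv]; ring
      have h6 : k ^ 2 * L * v * ω ^ 2 ≤ k ^ 2 * (L * (1 + ω₀ ^ 2 / δ)) * v ^ 2 := by
        have h7 : ω ^ 2 ≤ (1 + ω₀ ^ 2 / δ) * v := by
          have : ω₀ ^ 2 ≤ ω₀ ^ 2 / δ * v := by
            rw [div_mul_eq_mul_div, le_div_iff₀ hδ0]; gcongr
          have : ω ^ 2 = v + ω₀ ^ 2 := by rw [hv]; ring
          linarith
        calc _ ≤ k ^ 2 * L * v * ((1 + ω₀ ^ 2 / δ) * v) := by gcongr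
          _ = _ := by ring
      have h8 : k ^ 2 * (L * (1 + ω₀ ^ 2 / δ)) * v ^ 2 ≤ κ / 4 * v ^ 2 := by gcongr
      have h9 : κ * (v / 2) ^ 2 ≤ κ * (v - k * m) ^ 2 := by gcongr
      rw [h5]
      linarith

/-- Denominator of the resonance. -/
def Dp (a c : ℝ) : ℝ[X] := Polynomial.C 1 * Polynomial.X ^ 2 + Polynomial.C a * Polynomial.X + Polynomial.C c

lemma Dp_good {a c : ℝ} (ha : 0 < a) (hc : 0 < c) : Good (Dp a c) := by
  intro s hs h
  unfold Dp at h
  simp only [eval₂_add, eval₂_mul, eval₂_C, eval₂_X, eval₂_pow] at h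
  have hre := congrArg Complex.re h
  have him := congrArg Complex.im h
  simp [pow_two] at hre him
  have h1 : s.im * (2 * s.re + a) = 0 := by linarith
  rcases mul_eq_zero.1 h1 with h2 | h2
  · rw [h2] at hre
    nlinarith
  · linarith

lemma Dp_degree (a c : ℝ) : (Dp a c).degree = 2 := degree_quadratic one_ne_zero

lemma Lp_good : Good (Polynomial.X + Polynomial.C 1 : ℝ[X]) := by
  intro s hs h
  simp only [eval₂_add, eval₂_X, eval₂_C] at h
  have hre := congrArg Complex.re h
  simp at hre
  linarith

/-- Second order resonance. -/
def res (p q a c : ℝ) : RatFunc ℝ :=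
  algebraMap _ _ (Polynomial.C q * Polynomial.X + Polynomial.C p) / algebraMap _ _ (Dp a c)

/-- First order lag. -/
def lag (p : ℝ) : RatFunc ℝ :=
  algebraMap _ _ (Polynomial.C p : ℝ[X]) / algebraMap _ _ (Polynomial.X + Polynomial.C 1 : ℝ[X])

lemma res_deg (p q a c : ℝ) :
    (Polynomial.C q * Polynomial.X + Polynomial.C p : ℝ[X]).degree < (Dp a c).degree := by
  rw [Dp_degree]
  exact lt_of_le_of_lt degree_linear_le (by norm_num)

lemma lag_deg (p : ℝ) :
    (Polynomial.C p : ℝ[X]).degree < (Polynomial.X + Polynomial.C 1 : ℝ[X]).degree := by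
  rw [degree_X_add_C]
  exact lt_of_le_of_lt degree_C_le (by norm_num)

lemma res_RH (p q : ℝ) {a c : ℝ} (ha : 0 < a) (hc : 0 < c) : RH (res p q a c) :=
  RH_of_frac (Dp_good ha hc) (res_deg p q a c).le rfl

lemma lag_RH (p : ℝ) : RH (lag p) := RH_of_frac Lp_good (lag_deg p).le rfl

lemma evalC_res (p q : ℝ) {a c : ℝ} (ha : 0 < a) (hc : 0 < c) (ω : ℝ) :
    evalC (res p q a c) (jw ω) =
      (p + Complex.I * ω * q) / ((c - ω ^ 2 : ℝ) + Complex.I * (ω * a : ℝ)) := by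
  have := evalC_frac (Dp_good ha hc (jw ω) (by rw [jw_re])) (f := res p q a c) rfl
  rw [this]
  unfold Dp jw
  simp only [eval₂_add, eval₂_mul, eval₂_C, eval₂_X, eval₂_pow]
  congr 1
  · simp; ring
  · simp only [mul_pow, Complex.I_sq]
    push_cast
    simp
    ring

lemma evalC_lag (p : ℝ) (ω : ℝ) : evalC (lag p) (jw ω) = p / (1 + Complex.I * ω) := by
  have := evalC_frac (Lp_good (jw ω) (by rw [jw_re])) (f := lag p) rfl
  rw [this]
  unfold jw
  simp only [eval₂_add, eval₂_C, eval₂_X]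
  congr 1
  simp [add_comm]

/-- The destabilizing perturbation. -/
def pert (u : Fin n → ℂ) (k κ ω₀ a c : ℝ) : Matrix (Fin n) (Fin n) (RatFunc ℝ) :=
  Matrix.of fun i j =>
    res (k * (u i * starRingEnd ℂ (u j)).re) (k * (u i * starRingEnd ℂ (u j)).im / ω₀) a c
      + lag (if i = j then κ else 0)

lemma pert_mem (u : Fin n → ℂ) (k κ ω₀ : ℝ) {a c : ℝ} (ha : 0 < a) (hc : 0 < c) :
    MemRHinf (pert u k κ ω₀ a c) := by
  have h : ∀ i j, RH (pert u k κ ω₀ a c i j) := fun i j => (res_RH _ _ ha hc).add (lag_RH _)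
  exact ⟨fun i j => (h i j).1, fun s hs i j => (h i j).2 s hs⟩

lemma pert_inf (u : Fin n → ℂ) (k κ ω₀ : ℝ) {a c : ℝ} (ha : 0 < a) (hc : 0 < c) :
    evalInf (pert u k κ ω₀ a c) = 0 := by
  ext i j
  change infHom (⟨res _ _ a c, res_RH _ _ ha hc⟩ + ⟨lag _, lag_RH _⟩) = 0
  rw [map_add]
  have h1 : ∀ p q, infHom ⟨res p q a c, res_RH _ _ ha hc⟩ = 0 := fun p q =>
    atInfinity_frac_zero (Dp_good ha hc) (res_deg p q a c) rfl
  have h2 : ∀ p, infHom ⟨lag p, lag_RH _⟩ = 0 := fun p =>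
    atInfinity_frac_zero Lp_good (lag_deg p) rfl
  rw [h1, h2, add_zero]

lemma pert_eval (u : Fin n → ℂ) (k κ ω₀ : ℝ) {a c : ℝ} (ha : 0 < a) (hc : 0 < c) (ω : ℝ) :
    evalM (pert u k κ ω₀ a c) (jw ω) =
      ((k : ℂ) / ((c - ω ^ 2 : ℝ) + Complex.I * (ω * a : ℝ))) •
        ((((1 + ω / ω₀) / 2 : ℝ) : ℂ) • vecMulVec u (star u) +
          (((1 - ω / ω₀) / 2 : ℝ) : ℂ) • vecMulVec (star u) u) +
      ((κ : ℂ) / (1 + Complex.I * ω)) • 1 := by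
  ext i j
  change evalHom (jw ω) (by rw [jw_re]) (⟨res _ _ a c, res_RH _ _ ha hc⟩ + ⟨lag _, lag_RH _⟩) = _
  rw [map_add]
  change evalC (res _ _ a c) (jw ω) + evalC (lag _) (jw ω) = _
  rw [evalC_res _ _ ha hc, evalC_lag]
  simp only [Matrix.add_apply, Matrix.smul_apply, vecMulVec_apply, smul_eq_mul, Matrix.one_apply,
    Pi.star_apply]
  congr 1
  · rw [div_mul_eq_mul_div]
    congr 1
    set w := u i * starRingEnd ℂ (u j) with hw
    have h1 : u i * star (u j) = w := rfl
    have h2 : star (u i) * u j = starRingEnd ℂ w := by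
      rw [hw]; simp
    rw [h1, h2]
    apply Complex.ext <;> simp [-mul_eq_mul_left_iff] <;> ring
  · split_ifs <;> simp

/-- squared Euclidean norm -/
def nsq (x : Fin n → ℂ) : ℝ := ∑ i, ‖x i‖ ^ 2

lemma nsq_pos {x : Fin n → ℂ} (hx : x ≠ 0) : 0 < nsq x := by
  obtain ⟨i, hi⟩ := Function.ne_iff.1 hx
  unfold nsq
  apply Finset.sum_pos' (fun _ _ => by positivity)
  exact ⟨i, Finset.mem_univ _, by have := norm_pos_iff.2 hi; positivity⟩

lemma nsq_nonneg (x : Fin n → ℂ) : 0 ≤ nsq x := Finset.sum_nonneg fun _ _ => by positivity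

lemma star_dot_self (x : Fin n → ℂ) : star x ⬝ᵥ x = (nsq x : ℂ) := by
  unfold nsq dotProduct
  push_cast
  refine Finset.sum_congr rfl fun i _ => ?_
  rw [Pi.star_apply, ← Complex.conj_mul']
  rfl

lemma cs (u x : Fin n → ℂ) : ‖u ⬝ᵥ x‖ ^ 2 ≤ nsq u * nsq x := by
  have h1 : ‖u ⬝ᵥ x‖ ≤ ∑ i, ‖u i‖ * ‖x i‖ := by
    unfold dotProduct
    refine (norm_sum_le _ _).trans (le_of_eq ?_)
    simp
  calc _ ≤ (∑ i, ‖u i‖ * ‖x i‖) ^ 2 := by gcongr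
    _ ≤ _ := Finset.sum_mul_sq_le_sq_mul_sq _ _ _

lemma nsq_star (u : Fin n → ℂ) : nsq (star u) = nsq u := by simp [nsq]

lemma qf_vec (u x : Fin n → ℂ) : qf (vecMulVec u (star u)) x = ((‖star u ⬝ᵥ x‖ ^ 2 : ℝ) : ℂ) := by
  unfold qf
  rw [vecMulVec_mulVec]
  push_cast
  rw [← Complex.conj_mul', starRingEnd_apply, ← Matrix.star_dotProduct_star, star_star]
  simp [dotProduct_smul, mul_comm]

lemma pert_qf (u : Fin n → ℂ) (k κ ω₀ : ℝ) {a c : ℝ} (ha : 0 < a) (hc : 0 < c) (ω : ℝ)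
    (x : Fin n → ℂ) :
    qf (evalM (pert u k κ ω₀ a c) (jw ω)) x =
      ((k : ℂ) / ((c - ω ^ 2 : ℝ) + Complex.I * (ω * a : ℝ))) *
        (((1 + ω / ω₀) / 2 * ‖star u ⬝ᵥ x‖ ^ 2 + (1 - ω / ω₀) / 2 * ‖u ⬝ᵥ x‖ ^ 2 : ℝ) : ℂ) +
      ((κ : ℂ) / (1 + Complex.I * ω)) * (nsq x : ℂ) := by
  rw [pert_eval u k κ ω₀ ha hc]
  have h1 := qf_vec u x
  have h2 := qf_vec (star u) x
  rw [star_star] at h2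
  unfold qf at h1 h2 ⊢
  simp only [add_mulVec, smul_mulVec, dotProduct_add, dotProduct_smul, smul_eq_mul, one_mulVec,
    h1, h2, star_dot_self]
  push_cast
  ring

lemma im_term (k q x y : ℝ) (h : 0 < x ^ 2 + y ^ 2) :
    ((k : ℂ) / ((x : ℝ) + Complex.I * (y : ℝ)) * (q : ℂ)).im = -(k * y * q) / (x ^ 2 + y ^ 2) := by
  have hns : Complex.normSq ((x : ℂ) + Complex.I * (y : ℂ)) = x ^ 2 + y ^ 2 := by
    rw [Complex.normSq_apply]; simp; ring
  rw [Complex.im_mul_ofReal, Complex.div_im, hns]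
  simp
  ring

lemma pert_SNI (u : Fin n → ℂ) {k κ ω₀ a c : ℝ} (hk : 0 ≤ k) (hω₀ : 0 < ω₀) (hκ : 0 < κ)
    (ha : 0 < a) (hc : 0 < c)
    (h : ∀ ω : ℝ, 0 < ω → k * (ω * a) * ((ω / ω₀ - 1) / 2 * nsq u) * (1 + ω ^ 2) <
      κ * ω * ((c - ω ^ 2) ^ 2 + (ω * a) ^ 2)) : IsSNI (pert u k κ ω₀ a c) := by
  refine ⟨pert_mem u k κ ω₀ ha hc, fun ω hω => ?_⟩
  rw [niKer_posDef_iff]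
  intro x hx
  have hx' := nsq_pos hx
  have hD : 0 < (c - ω ^ 2) ^ 2 + (ω * a) ^ 2 := by positivity
  have hq := pert_qf u k κ ω₀ ha hc ω x
  set Q := (1 + ω / ω₀) / 2 * ‖star u ⬝ᵥ x‖ ^ 2 + (1 - ω / ω₀) / 2 * ‖u ⬝ᵥ x‖ ^ 2 with hQ
  have hi2 := im_term κ (nsq x) 1 ω (by positivity)
  rw [Complex.ofReal_one] at hi2
  rw [hq, Complex.add_im, im_term k Q _ _ hD, hi2]
  have hU := nsq_nonneg u
  have key : 0 < k * (ω * a) * Q * (1 + ω ^ 2) + κ * ω * nsq x * ((c - ω ^ 2) ^ 2 + (ω * a) ^ 2) := by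
    have hkk : 0 ≤ k * (ω * a) * (1 + ω ^ 2) := by positivity
    have hcs := cs u x
    have h3 : 0 ≤ (1 + ω / ω₀) / 2 * ‖star u ⬝ᵥ x‖ ^ 2 := by positivity
    rcases le_or_gt (ω / ω₀) 1 with h1 | h1
    · have : 0 ≤ Q := by
        have : 0 ≤ (1 - ω / ω₀) / 2 * ‖u ⬝ᵥ x‖ ^ 2 := mul_nonneg (by linarith) (by positivity)
        linarith
      positivity
    · have h4 : -((ω / ω₀ - 1) / 2 * nsq u * nsq x) ≤ Q := by
        have : (ω / ω₀ - 1) / 2 * ‖u ⬝ᵥ x‖ ^ 2 ≤ (ω / ω₀ - 1) / 2 * (nsq u * nsq x) :=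
          mul_le_mul_of_nonneg_left hcs (by linarith)
        nlinarith
      have h5 := mul_le_mul_of_nonneg_left h4 hkk
      have h6 := mul_lt_mul_of_pos_right (h ω hω) hx'
      nlinarith
  have e : -(k * (ω * a) * Q) / ((c - ω ^ 2) ^ 2 + (ω * a) ^ 2) + -(κ * ω * nsq x) / (1 ^ 2 + ω ^ 2)
      = -((k * (ω * a) * Q * (1 + ω ^ 2) + κ * ω * nsq x * ((c - ω ^ 2) ^ 2 + (ω * a) ^ 2)) /
        (((c - ω ^ 2) ^ 2 + (ω * a) ^ 2) * (1 + ω ^ 2))) := by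
    rw [one_pow, div_add_div _ _ hD.ne' (by positivity), ← neg_div]
    congr 1
    ring
  rw [e]
  have := div_pos key (by positivity : 0 < ((c - ω ^ 2) ^ 2 + (ω * a) ^ 2) * (1 + ω ^ 2))
  linarith

lemma jw_zero : jw 0 = 0 := by simp [jw]

lemma pert_zero (u : Fin n → ℂ) (k κ ω₀ : ℝ) {a c : ℝ} (ha : 0 < a) (hc : 0 < c) (i j : Fin n) :
    evalR (pert u k κ ω₀ a c) 0 i j =
      k / c * (u i * starRingEnd ℂ (u j)).re + if i = j then κ else 0 := by
  have h := congrFun (congrFun (pert_eval u k κ ω₀ ha hc 0) i) j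
  rw [jw_zero, evalR_map] at h
  have h' := congrArg Complex.re h
  simp only [Matrix.map_apply, Complex.coe_algebraMap, Complex.ofReal_re] at h'
  rw [h']
  simp only [Matrix.add_apply, Matrix.smul_apply, vecMulVec_apply, smul_eq_mul, Matrix.one_apply,
    Pi.star_apply]
  have : (k : ℂ) / ((c - 0 ^ 2 : ℝ) + Complex.I * (0 * a : ℝ)) = ((k / c : ℝ) : ℂ) := by
    push_cast; simp
  rw [this]
  rw [Complex.add_re, Complex.re_ofReal_mul]
  congr 1
  · simp; left; ring
  · split_ifs <;> simp

lemma pert_loewner (u : Fin n → ℂ) {k κ ω₀ a c γ : ℝ} (hk : 0 ≤ k)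
    (ha : 0 < a) (hc : 0 < c) (h : k / c * nsq u + κ ≤ γ) :
    LoewnerLE (evalR (pert u k κ ω₀ a c) 0) (γ • 1) := by
  unfold LoewnerLE
  refine Matrix.PosSemidef.of_dotProduct_mulVec_nonneg ?_ ?_
  · ext i j
    simp only [conjTranspose_apply, Matrix.sub_apply, pert_zero u k κ ω₀ ha hc, Matrix.smul_apply,
      Matrix.one_apply, star_trivial, eq_comm (a := j) (b := i)]
    congr 3
    simp; ring
  · intro x
    rw [star_trivial, sub_mulVec, dotProduct_sub, smul_mulVec, one_mulVec, dotProduct_smul,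
      smul_eq_mul, sub_nonneg]
    set z : Fin n → ℂ := fun i => (x i : ℂ) with hz
    have hq := congrArg Complex.re (pert_qf u k κ ω₀ ha hc 0 z)
    have hn : nsq z = x ⬝ᵥ x := by
      simp [nsq, hz, dotProduct, pow_two]
    have hL : (qf (evalM (pert u k κ ω₀ a c) (jw 0)) z).re =
        x ⬝ᵥ (evalR (pert u k κ ω₀ a c) 0 *ᵥ x) := by
      rw [jw_zero, evalR_map]
      unfold qf
      simp [hz, dotProduct, mulVec, Matrix.map_apply]
    have : (k : ℂ) / ((c - 0 ^ 2 : ℝ) + Complex.I * (0 * a : ℝ)) = ((k / c : ℝ) : ℂ) := by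
      push_cast; simp
    rw [hL, this, ← Complex.ofReal_mul, Complex.add_re, Complex.ofReal_re] at hq
    rw [hq]
    have h1 := cs u z
    have h2 := cs (star u) z
    rw [nsq_star] at h2
    have h3 := nsq_nonneg z
    have hkc : 0 ≤ k / c := by positivity
    have h5 : k / c * ((1 + 0 / ω₀) / 2 * ‖star u ⬝ᵥ z‖ ^ 2 + (1 - 0 / ω₀) / 2 * ‖u ⬝ᵥ z‖ ^ 2) ≤
        k / c * (nsq u * nsq z) := by
      apply mul_le_mul_of_nonneg_left _ hkc
      rw [zero_div]; linarith
    have h6 : ((κ : ℂ) / (1 + Complex.I * ((0 : ℝ) : ℂ)) * (nsq z : ℂ)).re = κ * nsq z := by simp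
    rw [h6, ← hn]
    nlinarith

lemma resonance (u : Fin n → ℂ) {ω₀ κ γ b : ℝ} (m : ℝ) (hω₀ : 0 < ω₀) (hκ : 0 < κ) (hκγ : κ < γ)
    (hb : 0 < b) : ∃ P : Matrix (Fin n) (Fin n) (RatFunc ℝ), IsSNI P ∧ (evalInf P).PosSemidef ∧
      LoewnerLE (evalR P 0) (γ • 1) ∧
      evalM P (jw ω₀) = ((1 : ℂ) / (m + Complex.I * b)) • vecMulVec u (star u) +
        ((κ : ℂ) / (1 + Complex.I * ω₀)) • 1 := by
  obtain ⟨k, hk, h1, h2, h3⟩ := ((eventually_mem_nhdsWithin (s := Set.Ioi (0:ℝ)) (a := (0:ℝ))).and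
    ((small_mul |m| (ε := ω₀ ^ 2 / 2) (by positivity)).and
    ((small_mul (nsq u) (ε := (γ - κ) * (ω₀ ^ 2 / 2))
      (mul_pos (by linarith) (by positivity))).and
    (scalar_est m hω₀ hκ hb (nsq_nonneg u))))).exists
  have hk : 0 < k := hk
  have ha : 0 < k * b / ω₀ := by positivity
  have hkm : -(k * |m|) ≤ k * m := by nlinarith [neg_abs_le m]
  have hc2 : ω₀ ^ 2 / 2 < ω₀ ^ 2 + k * m := by linarith
  have hc : 0 < ω₀ ^ 2 + k * m := lt_trans (by positivity) hc2
  refine ⟨pert u k κ ω₀ (k * b / ω₀) (ω₀ ^ 2 + k * m), ?_, ?_, ?_, ?_⟩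
  · refine pert_SNI u hk.le hω₀ hκ ha hc fun ω hω => ?_
    have := mul_lt_mul_of_pos_right (h3 ω hω) hω
    calc _ = k ^ 2 * (b * nsq u / (2 * ω₀ ^ 2)) * (ω - ω₀) * (1 + ω ^ 2) * ω := by
          field_simp
      _ < _ := this
      _ = _ := by ring
  · rw [pert_inf u k κ ω₀ ha hc]; exact PosSemidef.zero
  · refine pert_loewner u hk.le ha hc ?_
    have : k / (ω₀ ^ 2 + k * m) * nsq u ≤ γ - κ := by
      rw [div_mul_eq_mul_div, div_le_iff₀ hc]
      nlinarith
    linarith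
  · rw [pert_eval u k κ ω₀ ha hc]
    congr 1
    have hkC : (k : ℂ) ≠ 0 := by exact_mod_cast hk.ne'
    have e1 : ω₀ ^ 2 + k * m - ω₀ ^ 2 = k * m := by ring
    have e2 : ω₀ * (k * b / ω₀) = k * b := by field_simp
    have e3 : (k : ℂ) / ((k * m : ℝ) + Complex.I * (k * b : ℝ)) = 1 / (m + Complex.I * b) := by
      push_cast
      rw [show (k : ℂ) * m + Complex.I * (k * b) = k * (m + Complex.I * b) by ring]
      rw [div_mul_eq_div_div, div_self hkC]
    rw [e1, e2, e3, div_self hω₀.ne']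
    simp

/-- Frequency-domain necessity. -/
lemma necessity_kernel {C : Matrix (Fin n) (Fin n) (RatFunc ℝ)} (hC : MemRHinf C) {γ : ℝ} (hγ : 0 < γ)
    (H : ∀ P : Matrix (Fin n) (Fin n) (RatFunc ℝ), IsSNI P → (evalInf P).PosSemidef →
        LoewnerLE (evalR P 0) (γ • 1) → FeedbackStable P C) {ω₀ : ℝ} (hω₀ : 0 < ω₀) :
    (niKer (evalM C (jw ω₀))).PosSemidef := by
  rw [niKer_posSemidef_iff]
  by_contra! hcon
  obtain ⟨x, hx⟩ := hcon
  set y := evalM C (jw ω₀) *ᵥ x with hy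
  have hqf : qf (evalM C (jw ω₀)) x = star x ⬝ᵥ y := rfl
  rw [hqf] at hx
  obtain ⟨κ, hκ, h1, h2⟩ := ((eventually_mem_nhdsWithin (s := Set.Ioi (0:ℝ)) (a := (0:ℝ))).and
    ((small_mul 1 hγ).and
    (small_mul (ω₀ / (1 + ω₀ ^ 2) * nsq y) hx))).exists
  have hκ : 0 < κ := hκ
  rw [mul_one] at h1
  set q : ℂ := (κ : ℂ) / (1 + Complex.I * ω₀) with hq
  set u := x - q • y with hu
  have hd : star u ⬝ᵥ y = star x ⬝ᵥ y - star q * (nsq y : ℂ) := by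
    rw [hu, star_sub, sub_dotProduct, star_smul, smul_dotProduct, star_dot_self, smul_eq_mul]
  have him : 0 < (star u ⬝ᵥ y).im := by
    have h3 := im_term κ 1 1 ω₀ (by positivity)
    have h4 : q.im = -(κ * ω₀) / (1 + ω₀ ^ 2) := by
      simpa [hq] using h3
    have h5 : (star q).im = - q.im := rfl
    rw [hd, Complex.sub_im, Complex.im_mul_ofReal, h5, h4]
    have : -(-(κ * ω₀) / (1 + ω₀ ^ 2)) * nsq y = κ * (ω₀ / (1 + ω₀ ^ 2) * nsq y) := by ring
    linarith
  obtain ⟨P, hP, hPi, hP0, hPe⟩ := resonance u (star u ⬝ᵥ y).re hω₀ hκ h1 him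
  have hst := fb_ne hP.1 hC (H P hP hPi hP0) (jw ω₀) (by rw [jw_re])
  have hw : ((star u ⬝ᵥ y).re : ℂ) + Complex.I * ((star u ⬝ᵥ y).im : ℂ) = star u ⬝ᵥ y := by
    rw [mul_comm]; exact Complex.re_add_im _
  rw [hw] at hPe
  have hne : star u ⬝ᵥ y ≠ 0 := by
    intro h0; rw [h0] at him; simp at him
  have hPy : evalM P (jw ω₀) *ᵥ y = x := by
    rw [hPe, add_mulVec, smul_mulVec, vecMulVec_mulVec, smul_mulVec, one_mulVec, ← hq]
    have : ((1 : ℂ) / (star u ⬝ᵥ y)) • (MulOpposite.op (star u ⬝ᵥ y) • u) = u := by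
      ext i
      simp
      field_simp
    rw [this, hu]
    abel
  have hx0 : x ≠ 0 := by
    rintro h0
    rw [h0] at hx
    simp at hx
  apply hst
  rw [← Matrix.exists_mulVec_eq_zero_iff]
  refine ⟨x, hx0, ?_⟩
  rw [sub_mulVec, one_mulVec, ← mulVec_mulVec, ← hy, hPy, sub_self]

lemma qf_zero_im {C : Matrix (Fin n) (Fin n) (RatFunc ℝ)} (hC : MemRHinf C)
    (h : ∀ ω : ℝ, 0 < ω → (niKer (evalM C (jw ω))).PosSemidef) (x : Fin n → ℂ) :
    (qf (evalM C 0) x).im ≤ 0 := by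
  have hc : Tendsto (fun ω : ℝ => (qf (evalM C (jw ω)) x).im) (𝓝[>] 0) (𝓝 (qf (evalM C 0) x).im) := by
    refine (Complex.continuous_im.tendsto _).comp ?_
    unfold qf dotProduct mulVec dotProduct
    refine tendsto_finsetSum _ fun i _ => Tendsto.const_mul _ ?_
    refine tendsto_finsetSum _ fun j _ => Tendsto.mul_const _ ?_
    exact ((evalC_continuousAt (hC.entry i j) (le_refl (0:ℝ))).tendsto).comp jw_tendsto
  refine le_of_tendsto hc ?_
  filter_upwards [self_mem_nhdsWithin] with ω hω
  exact (niKer_posSemidef_iff _).1 (h ω hω) x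

lemma zero_symm {C : Matrix (Fin n) (Fin n) (RatFunc ℝ)} (hC : MemRHinf C)
    (h : ∀ ω : ℝ, 0 < ω → (niKer (evalM C (jw ω))).PosSemidef) (i j : Fin n) :
    evalR C 0 i j = evalR C 0 j i := by
  have key : ∀ i j : Fin n, evalR C 0 i j ≤ evalR C 0 j i := by
    intro i j
    have h1 := qf_zero_im hC h (Pi.single i 1 + Pi.single j Complex.I)
    rw [evalR_map] at h1
    unfold qf at h1
    rw [star_add, mulVec_add] at h1
    simp [add_dotProduct, dotProduct_add, ← Pi.single_star] at h1
    linarith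
  exact le_antisymm (key i j) (key j i)

lemma necessity_dc {C : Matrix (Fin n) (Fin n) (RatFunc ℝ)} (hC : MemRHinf C) {γ : ℝ} (hγ : 0 < γ)
    (H : ∀ P : Matrix (Fin n) (Fin n) (RatFunc ℝ), IsSNI P → (evalInf P).PosSemidef →
        LoewnerLE (evalR P 0) (γ • 1) → FeedbackStable P C) :
    LoewnerLT (evalR C 0) (γ⁻¹ • 1) := by
  have hs := zero_symm hC fun ω hω => necessity_kernel hC hγ H hω
  have hh : (γ⁻¹ • (1 : Matrix (Fin n) (Fin n) ℝ) - evalR C 0).IsHermitian := by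
    ext i j
    simp only [conjTranspose_apply, Matrix.sub_apply, Matrix.smul_apply,
      Matrix.one_apply, star_trivial, eq_comm (a := j) (b := i)]
    rw [hs]
  unfold LoewnerLT
  rw [hh.posDef_iff_eigenvalues_pos]
  by_contra! hcon
  obtain ⟨i, hi⟩ := hcon
  set μ := hh.eigenvalues i with hμ
  have hv := hh.mulVec_eigenvectorBasis i
  have hv0 : (hh.eigenvectorBasis i : Fin n → ℝ) ≠ 0 := by
    intro h0
    apply hh.eigenvectorBasis.orthonormal.ne_zero i
    ext j
    exact congrFun h0 j
  set v : Fin n → ℝ := (hh.eigenvectorBasis i : Fin n → ℝ) with hvdef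
  set l : ℝ := γ⁻¹ - μ with hl
  have hγi : 0 < γ⁻¹ := by positivity
  have hl0 : 0 < l := by linarith
  have hCv : evalR C 0 *ᵥ v = l • v := by
    rw [sub_mulVec, smul_mulVec, one_mulVec, ← hμ] at hv
    rw [hl, sub_smul, ← hv]; abel
  have hlγ : l⁻¹ ≤ γ := by
    rw [inv_le_comm₀ hl0 hγ]; linarith
  have hn0 : nsq (0 : Fin n → ℂ) = 0 := by simp [nsq]
  have hP : IsSNI (pert (0 : Fin n → ℂ) 1 l⁻¹ 1 1 1) := by
    refine pert_SNI _ zero_le_one one_pos (by positivity) one_pos one_pos fun ω hω => ?_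
    rw [hn0, mul_zero, mul_zero, zero_mul]
    positivity
  have hst := fb_ne hP.1 hC (H _ hP
    (by rw [pert_inf _ _ _ _ one_pos one_pos]; exact PosSemidef.zero)
    (pert_loewner _ zero_le_one one_pos one_pos (by rw [hn0]; linarith))) 0 (by simp)
  apply hst
  have hPe : evalM (pert (0 : Fin n → ℂ) 1 l⁻¹ 1 1 1) 0 = ((l⁻¹ : ℝ) : ℂ) • 1 := by
    rw [← jw_zero, pert_eval _ _ _ _ one_pos one_pos]
    simp
  rw [← Matrix.exists_mulVec_eq_zero_iff]
  refine ⟨fun i => (v i : ℂ), ?_, ?_⟩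
  · intro h0
    apply hv0
    ext j
    have := congrFun h0 j
    simpa using this
  · have hCc : evalM C 0 *ᵥ (fun i => (v i : ℂ)) = (l : ℂ) • (fun i => (v i : ℂ)) := by
      rw [evalR_map]
      ext j
      have := congrArg (fun r : ℝ => (r : ℂ)) (congrFun hCv j)
      simpa [mulVec, dotProduct] using this
    have hlC : (l : ℂ) ≠ 0 := by exact_mod_cast hl0.ne'
    rw [sub_mulVec, one_mulVec, ← mulVec_mulVec, hCc, hPe, smul_mulVec, one_mulVec, smul_smul]
    push_cast
    rw [inv_mul_cancel₀ hlC, one_smul, sub_self]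

/-- converse theorem for stable SNI uncertainty with nonnegative
instantaneous gain and bounded static gain. -/
theorem converse_stable_SNI_static_bound {n : ℕ} (C : Matrix (Fin n) (Fin n) (RatFunc ℝ)) (hC : MemRHinf C)
    (γ : ℝ) (hγ : 0 < γ) :
    (∀ P : Matrix (Fin n) (Fin n) (RatFunc ℝ), IsSNI P → (evalInf P).PosSemidef →
        LoewnerLE (evalR P 0) (γ • 1) → FeedbackStable P C) ↔
      (IsNI C ∧ LoewnerLT (evalR C 0) (γ⁻¹ • 1)) := by
  have hnp : ∀ s : ℂ, 0 ≤ s.re → ¬ HasPole C s := fun s hs ⟨i, j, h⟩ => hC.2 s hs i j h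
  constructor
  · intro H
    refine ⟨⟨hC.1, fun s hs => hnp s hs.le, fun ω hω _ => necessity_kernel hC hγ H hω,
      fun ω _ h => absurd h (hnp _ (by rw [jw_re])), fun h => absurd h (hnp 0 (by simp))⟩,
      necessity_dc hC hγ H⟩
  · rintro ⟨hNI, hC0⟩ P hP hPi hP0
    exact sufficiency hC hγ hP hPi hP0
      (fun ω hω => hNI.2.2.1 ω hω (hnp _ (by rw [jw_re]))) hC0

end NIControl
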